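/- arXiv:2107.04276 — 8 statements merged into one kernel-verified Lean document; each statement's English description precedes it below -/
import Mathlib

section
/- Let L = E W Eᵀ be the weighted Laplacian of a connected undirected graph G with positive edge weights, let (u,v) ∈ E be an edge, b = e_u − e_v, and let R_uv(G) = bᵀ L† b be the effective resistance between u and v. Then for every δ ∈ ℝ with |δ| ≤ 1/R_uv(G), the perturbed Laplacian L + δ b bᵀ is positive semidefinite; consequently the perturbed consensus protocol ẋ = −(L + δ b bᵀ)x is stable. -/
open Matrix BigOperators

/-! With `R = bᴴ y`, Cauchy–Schwarz for the semi-inner product `⟪x, z⟫ = xᴴ L z` gives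
`|bᴴ x|² = |⟪y, x⟫|² ≤ ⟪y, y⟫ ⟪x, x⟫ = R · xᴴ L x`. Hence `xᴴ L x + δ |bᴴ x|² ≥ (1 + δ R) xᴴ L x`
when `δ ≤ 0`, while for `δ ≥ 0` there is nothing to prove. Testing at `x = y` shows that the
resulting condition `-1 ≤ δ R` is sharp. -/

section RankOneUpdate

open scoped ComplexOrder

variable {ι 𝕜 : Type*} [Fintype ι] [RCLike 𝕜]

lemma star_mulVec_dotProduct_of_isHermitian {R : Type*} [NonUnitalSemiring R] [StarRing R]
    {A : Matrix ι ι R} (hA : A.IsHermitian) (x z : ι → R) :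
    star (A *ᵥ x) ⬝ᵥ z = star x ⬝ᵥ (A *ᵥ z) := by
  rw [star_mulVec, hA.eq, dotProduct_mulVec]

lemma norm_star_dotProduct_mulVec_sq_le_of_posSemidef {A : Matrix ι ι 𝕜} (hA : A.PosSemidef)
    (x z : ι → 𝕜) :
    ‖star x ⬝ᵥ (A *ᵥ z)‖ ^ 2 ≤
      RCLike.re (star x ⬝ᵥ (A *ᵥ x)) * RCLike.re (star z ⬝ᵥ (A *ᵥ z)) := by
  let := A.toSeminormedAddCommGroup hA
  let := A.toInnerProductSpace hA
  have inner_eq (a c : ι → 𝕜) : inner 𝕜 a c = star a ⬝ᵥ (A *ᵥ c) := dotProduct_comm _ _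
  have cauchy_schwarz := inner_mul_inner_self_le (𝕜 := 𝕜) x z
  rwa [norm_inner_symm z x, ← sq, inner_eq, inner_eq, inner_eq] at cauchy_schwarz

lemma re_star_dotProduct_add_smul_vecMulVec_mulVec (A : Matrix ι ι 𝕜) (b x : ι → 𝕜) (δ : ℝ) :
    RCLike.re (star x ⬝ᵥ ((A + δ • vecMulVec b (star b)) *ᵥ x)) =
      RCLike.re (star x ⬝ᵥ (A *ᵥ x)) + δ * ‖star b ⬝ᵥ x‖ ^ 2 := by
  have rankOne : star x ⬝ᵥ (vecMulVec b (star b) *ᵥ x) = ((‖star b ⬝ᵥ x‖ ^ 2 : ℝ) : 𝕜) := by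
    rw [vecMulVec_mulVec, dotProduct_smul, op_smul_eq_mul, star_dotProduct,
      RCLike.star_def, RCLike.conj_mul, RCLike.ofReal_pow]
  rw [add_mulVec, smul_mulVec, dotProduct_add, dotProduct_smul, rankOne, map_add, RCLike.smul_re,
    RCLike.ofReal_re]

lemma posSemidef_iff_re_star_dotProduct_mulVec_nonneg {A : Matrix ι ι 𝕜} :
    A.PosSemidef ↔ A.IsHermitian ∧ ∀ x, 0 ≤ RCLike.re (star x ⬝ᵥ (A *ᵥ x)) := by
  refine posSemidef_iff_dotProduct_mulVec.trans (and_congr_right fun hA ↦ forall_congr' fun x ↦ ?_)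
  rw [RCLike.nonneg_iff, hA.im_star_dotProduct_mulVec_self, and_iff_left rfl]

lemma neg_one_le_mul_of_posSemidef_add_smul_vecMulVec {A : Matrix ι ι 𝕜} (hA : A.PosSemidef)
    {y : ι → 𝕜} {δ : ℝ} (h : (A + δ • vecMulVec (A *ᵥ y) (star (A *ᵥ y))).PosSemidef) :
    -1 ≤ δ * RCLike.re (star y ⬝ᵥ (A *ᵥ y)) := by
  set R := RCLike.re (star y ⬝ᵥ (A *ᵥ y)) with hR
  have norm_eq : ‖star y ⬝ᵥ (A *ᵥ y)‖ = R := by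
    rw [hR, ← RCLike.norm_of_nonneg' (hA.dotProduct_mulVec_nonneg y), RCLike.ofReal_re,
      RCLike.norm_ofReal, abs_norm]
  have form_at_y : 0 ≤ R * (1 + δ * R) := by
    calc
      0 ≤ R + δ * ‖star (A *ᵥ y) ⬝ᵥ y‖ ^ 2 := by
        rw [hR, ← re_star_dotProduct_add_smul_vecMulVec_mulVec]
        exact h.re_dotProduct_nonneg y
      _ = R * (1 + δ * R) := by
        rw [star_mulVec_dotProduct_of_isHermitian hA.isHermitian, norm_eq]
        ring
  rcases (hA.re_dotProduct_nonneg y).eq_or_lt with R_zero | R_pos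
  · simp [hR, ← R_zero]
  · linarith [nonneg_of_mul_nonneg_right form_at_y R_pos]

lemma posSemidef_add_smul_vecMulVec {A : Matrix ι ι 𝕜} (hA : A.PosSemidef) {y : ι → 𝕜} {δ : ℝ}
    (hδ : -1 ≤ δ * RCLike.re (star y ⬝ᵥ (A *ᵥ y))) :
    (A + δ • vecMulVec (A *ᵥ y) (star (A *ᵥ y))).PosSemidef := by
  have update_isHermitian : (δ • vecMulVec (A *ᵥ y) (star (A *ᵥ y))).IsHermitian :=
    (posSemidef_vecMulVec_self_star _).isHermitian.smul (IsSelfAdjoint.all δ)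
  refine posSemidef_iff_re_star_dotProduct_mulVec_nonneg.2
    ⟨hA.isHermitian.add update_isHermitian, fun x ↦ ?_⟩
  rw [re_star_dotProduct_add_smul_vecMulVec_mulVec,
    star_mulVec_dotProduct_of_isHermitian hA.isHermitian]
  have cauchy_schwarz := norm_star_dotProduct_mulVec_sq_le_of_posSemidef hA y x
  have q_nonneg := hA.re_dotProduct_nonneg x
  set R := RCLike.re (star y ⬝ᵥ (A *ᵥ y))
  set q := RCLike.re (star x ⬝ᵥ (A *ᵥ x))
  rcases le_total 0 δ with δ_nonneg | δ_nonpos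
  · positivity
  · calc
      0 ≤ (1 + δ * R) * q := mul_nonneg (by linarith) q_nonneg
      _ = q + δ * (R * q) := by ring
      _ ≤ q + δ * ‖star y ⬝ᵥ (A *ᵥ x)‖ ^ 2 := by
        linarith [mul_le_mul_of_nonpos_left cauchy_schwarz δ_nonpos]

theorem secure_consensus_single_edge_robustness_general {L : Matrix ι ι 𝕜} (hL : L.PosSemidef)
    {b y : ι → 𝕜} (hy : L *ᵥ y = b) (δ : ℝ) :
    (L + δ • vecMulVec b (star b)).PosSemidef ↔ -1 ≤ δ * RCLike.re (star b ⬝ᵥ y) := by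
  subst hy
  rw [star_mulVec_dotProduct_of_isHermitian hL.isHermitian]
  exact ⟨neg_one_le_mul_of_posSemidef_add_smul_vecMulVec hL, posSemidef_add_smul_vecMulVec hL⟩

end RankOneUpdate

lemma neg_one_le_mul_of_abs_le_one_div {K : Type*} [Field K] [LinearOrder K]
    [IsStrictOrderedRing K] {a r : K} (h : |a| ≤ 1 / r) : -1 ≤ a * r := by
  have hr : 0 ≤ r := one_div_nonneg.1 ((abs_nonneg a).trans h)
  have abs_mul_le : |a * r| ≤ 1 := by
    simpa [abs_mul, abs_of_nonneg hr] using mul_le_of_le_div₀ zero_le_one hr h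
  exact (abs_le.1 abs_mul_le).1

/-- For the weighted Laplacian `L = E W Eᵀ` of a connected graph with
positive edge weights and an edge `(u,v)` with effective resistance `R = bᵀ L† b`
(encoded via a solution `y` of `L y = b`, `R = b ⬝ᵥ y`), any single-edge perturbation
`δ` with `|δ| ≤ 1/R` keeps `L + δ b bᵀ` positive semidefinite. -/
theorem secure_consensus_single_edge_robustness
    {n m : ℕ} (Em : Matrix (Fin n) (Fin m) ℝ) (w : Fin m → ℝ)
    (hw : ∀ k, 0 < w k)
    (hinc : ∀ k : Fin m, ∃ i j : Fin n, i ≠ j ∧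
      ∀ l, Em l k = (if l = i then (1 : ℝ) else 0) - (if l = j then 1 else 0))
    (L : Matrix (Fin n) (Fin n) ℝ)
    (hL : L = Em * Matrix.diagonal w * Em.transpose)
    -- connectivity: the kernel of `L` is exactly the span of the all-ones vector
    (hker : ∀ x : Fin n → ℝ, L.mulVec x = 0 ↔ ∃ c : ℝ, x = fun _ => c)
    (u v : Fin n) (huv : u ≠ v)
    (b : Fin n → ℝ)
    (hb : b = fun i => (if i = u then (1 : ℝ) else 0) - (if i = v then 1 else 0))
    -- `(u,v)` is an edge of the graph
    (hedge : ∃ k : Fin m, (∀ l, Em l k = b l) ∨ (∀ l, Em l k = -(b l)))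
    -- effective resistance between `u` and `v`
    (y : Fin n → ℝ) (hy : L.mulVec y = b)
    (R : ℝ) (hR : R = b ⬝ᵥ y)
    (δ : ℝ) (hδ : |δ| ≤ 1 / R) :
    (L + δ • Matrix.vecMulVec b b).PosSemidef := by
  have hLpsd : L.PosSemidef := by
    simpa [hL] using (PosSemidef.diagonal fun k ↦ (hw k).le).mul_mul_conjTranspose_same Em
  have hδR : -1 ≤ δ * (b ⬝ᵥ y) := neg_one_le_mul_of_abs_le_one_div (hR ▸ hδ)
  simpa only [star_trivial] using
    (secure_consensus_single_edge_robustness_general hLpsd hy δ).2 (by simpa using hδR)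
end

section
/- Let L = E W Eᵀ be the weighted Laplacian of a connected undirected graph G with positive edge weights, let u ≠ v be vertices, b = e_u − e_v, and R_uv(G) = bᵀ L† b the effective resistance between u and v. If δ < −1/R_uv(G), then L + δ b bᵀ is not positive semidefinite: there exists x ∈ ℝⁿ with xᵀ(L + δ b bᵀ)x < 0 (indeed x = L† b is such a vector). Hence the robustness bound |δ| ≤ 1/R_uv(G) for single-edge perturbations is sharp. -/
open Matrix BigOperators

/- Test `A + δ b bᴴ` on the potential `y` with `A y = b`: the value is `R + δ R²`, where
`R = bᴴ y = yᴴ A y`. Since `A` is positive semidefinite and `A y ≠ 0`, `R` is positive, so the value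
is negative as soon as `δ < -1/R`. -/

theorem dotProduct_add_smul_vecMulVec_mulVec {m n α : Type*} [Fintype m] [Fintype n]
    [CommSemiring α] (A : Matrix m n α) (δ : α) (b x : m → α) (c y : n → α) :
    x ⬝ᵥ (A + δ • vecMulVec b c) *ᵥ y = x ⬝ᵥ A *ᵥ y + δ * ((x ⬝ᵥ b) * (c ⬝ᵥ y)) := by
  rw [add_mulVec, smul_mulVec, vecMulVec_mulVec, op_smul_eq_smul, dotProduct_add,
    dotProduct_smul, dotProduct_smul, smul_eq_mul, smul_eq_mul, mul_comm (c ⬝ᵥ y)]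

section RCLike

open scoped ComplexOrder

variable {n 𝕜 : Type*} [Fintype n] [RCLike 𝕜] {A : Matrix n n 𝕜}

theorem dotProduct_mulVec_pos_of_mulVec_ne_zero (hA : A.PosSemidef) {y : n → 𝕜}
    (hy : A *ᵥ y ≠ 0) : 0 < star y ⬝ᵥ A *ᵥ y :=
  (hA.dotProduct_mulVec_nonneg y).lt_of_ne' fun h => hy ((hA.dotProduct_mulVec_zero_iff y).1 h)

theorem secure_consensus_single_edge_bound_sharp_general (hA : A.PosSemidef) {b y : n → 𝕜}
    (hb : b ≠ 0) (hy : A *ᵥ y = b) {δ : 𝕜} (hδ : δ < -(1 / (star b ⬝ᵥ y))) :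
    star y ⬝ᵥ (A + δ • vecMulVec b (star b)) *ᵥ y < 0 ∧
      ¬ (A + δ • vecMulVec b (star b)).PosSemidef := by
  set R := star b ⬝ᵥ y with hR
  have hyb : star y ⬝ᵥ b = R := by
    rw [hR, ← hy, star_mulVec, hA.isHermitian.eq, dotProduct_mulVec]
  have hR_pos : 0 < R := by
    rw [← hyb, ← hy]
    exact dotProduct_mulVec_pos_of_mulVec_ne_zero hA (hy ▸ hb)
  have hδR : δ * R < -1 := by
    simpa only [neg_mul, one_div_mul_cancel hR_pos.ne'] using mul_lt_mul_of_pos_right hδ hR_pos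
  have hneg : star y ⬝ᵥ (A + δ • vecMulVec b (star b)) *ᵥ y < 0 := calc
    _ = R + δ * (R * R) := by rw [dotProduct_add_smul_vecMulVec_mulVec, hy, hyb]
    _ = R * (1 + δ * R) := by ring
    _ < 0 := mul_neg_of_pos_of_neg hR_pos (by simpa using add_lt_add_right hδR 1)
  exact ⟨hneg, fun h => hneg.not_ge (h.dotProduct_mulVec_nonneg y)⟩

end RCLike

theorem posSemidef_mul_diagonal_mul_transpose {m n R : Type*} [Fintype m] [Finite n]
    [DecidableEq m] [CommRing R] [PartialOrder R] [StarRing R] [TrivialStar R] [StarOrderedRing R]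
    (B : Matrix n m R) {w : m → R} (hw : 0 ≤ w) : (B * diagonal w * Bᵀ).PosSemidef := by
  simpa only [conjTranspose_eq_transpose_of_trivial] using
    (PosSemidef.diagonal hw).mul_mul_conjTranspose_same B

theorem indicator_sub_indicator_ne_zero {ι R : Type*} [DecidableEq ι] [AddGroupWithOne R]
    [NeZero (1 : R)] {u v : ι} (huv : u ≠ v) :
    (fun i => (if i = u then (1 : R) else 0) - if i = v then 1 else 0) ≠ 0 :=
  fun h => by simpa [huv] using congrFun h u

/-- Sharpness of the single-edge robustness bound: if `δ < -1/R_uv(G)`,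
then `L + δ b bᵀ` is no longer positive semidefinite; indeed the solution `y` of
`L y = b` (i.e. `y = L† b`) is a witness with `yᵀ (L + δ b bᵀ) y < 0`. -/
theorem secure_consensus_single_edge_bound_sharp
    {n m : ℕ} (Em : Matrix (Fin n) (Fin m) ℝ) (w : Fin m → ℝ)
    (hw : ∀ k, 0 < w k)
    (hinc : ∀ k : Fin m, ∃ i j : Fin n, i ≠ j ∧
      ∀ l, Em l k = (if l = i then (1 : ℝ) else 0) - (if l = j then 1 else 0))
    (L : Matrix (Fin n) (Fin n) ℝ)
    (hL : L = Em * Matrix.diagonal w * Em.transpose)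
    -- connectivity: the kernel of `L` is exactly the span of the all-ones vector
    (hker : ∀ x : Fin n → ℝ, L.mulVec x = 0 ↔ ∃ c : ℝ, x = fun _ => c)
    (u v : Fin n) (huv : u ≠ v)
    (b : Fin n → ℝ)
    (hb : b = fun i => (if i = u then (1 : ℝ) else 0) - (if i = v then 1 else 0))
    -- effective resistance between `u` and `v`
    (y : Fin n → ℝ) (hy : L.mulVec y = b)
    (R : ℝ) (hR : R = b ⬝ᵥ y)
    (δ : ℝ) (hδ : δ < -(1 / R)) :
    (y ⬝ᵥ (L + δ • Matrix.vecMulVec b b).mulVec y < 0) ∧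
      ¬ (L + δ • Matrix.vecMulVec b b).PosSemidef := by
  subst hL hR
  exact secure_consensus_single_edge_bound_sharp_general
    (posSemidef_mul_diagonal_mul_transpose Em fun k => (hw k).le)
    (hb ▸ indicator_sub_indicator_ne_zero huv) hy hδ
end

section
/- Let L ∈ ℝ^{n×n} be symmetric and let α, K_P, K_I ∈ ℝ. Define the block matrix M = [[K_P L + α Iₙ, −K_I L],[K_I L, 0_{n×n}]] ∈ ℝ^{2n×2n}. Then a complex number μ is an eigenvalue of M if and only if there exists an eigenvalue λ of L such that μ² − (α + K_P λ) μ + (K_I λ)² = 0. Equivalently, if λ₁,…,λₙ are the eigenvalues of L, the 2n eigenvalues of M are φ_i ± σ_i for i = 1,…,n, where φ_i = (α + K_P λ_i)/2 and σ_i = √(φ_i² − (K_I λ_i)²) (with the square root taken with nonnegative imaginary part). -/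
open Matrix BigOperators

/-!
`M` is a `2 × 2` matrix over the commutative ring of polynomials in `L`. Determinants over that
ring can be taken in two stages, so `det (μ - M) = det (q_μ(L))`, where
`q_μ(X) = μ² - (α + K_P X) μ + (K_I X)²` is the determinant of the `2 × 2` matrix `μ - M`.
The characteristic polynomial of a real symmetric `L` splits, and then `q_μ(L)` is singular iff
`q_μ` vanishes at an eigenvalue of `L`: otherwise a Bézout identity between `q_μ` and the
characteristic polynomial, evaluated at `L`, inverts `q_μ(L)`.
-/

open Polynomial

section SplitPolynomial

theorem isCoprime_of_splits_of_forall_not_isRoot {K : Type*} [Field K] {p q : K[X]}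
    (hp : p.Splits) (hp0 : p ≠ 0) (h : ∀ x, p.IsRoot x → ¬q.IsRoot x) : IsCoprime p q := by
  refine isCoprime_of_irreducible_dvd (fun h0 => hp0 h0.1) fun z hz hzp hzq => ?_
  obtain ⟨x, hx⟩ := (hp.of_dvd hp0 hzp).exists_eval_eq_zero hz.degree_pos.ne'
  exact h x (IsRoot.dvd hx hzp) (IsRoot.dvd hx hzq)

theorem isUnit_aeval_of_isCoprime {R A : Type*} [CommSemiring R] [Semiring A] [Algebra R A]
    {p q : R[X]} (h : IsCoprime p q) {a : A} (ha : aeval a p = 0) : IsUnit (aeval a q) := by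
  obtain ⟨u, v, huv⟩ := h
  have hvq : aeval a (v * q) = 1 := by simpa [ha] using congrArg (aeval a) huv
  refine ⟨⟨aeval a q, aeval a v, ?_, ?_⟩, rfl⟩
  · rw [← map_mul, mul_comm, hvq]
  · rw [← map_mul, hvq]

theorem exists_isRoot_map_iff_of_splits {k K : Type*} [Field k] [CommRing K] [IsDomain K]
    (f : k →+* K) {p : k[X]} (hp : p.Splits) (hp0 : p ≠ 0) (P : K → Prop) :
    (∃ x, (p.map f).IsRoot x ∧ P x) ↔ ∃ x, p.IsRoot x ∧ P (f x) := by
  constructor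
  · rintro ⟨_, hx, hPx⟩
    obtain ⟨x, rfl⟩ := hp.mem_range_of_isRoot hp0 hx
    exact ⟨x, (isRoot_map_iff f.injective).mp hx, hPx⟩
  · rintro ⟨x, hx, hPx⟩
    exact ⟨f x, hx.map, hPx⟩

end SplitPolynomial

section BlockMatrix

variable {n : Type*} [Fintype n] [DecidableEq n]

theorem hasEigenvalue_toLin'_iff_isRoot_charpoly {R : Type*} [CommRing R] [IsDomain R]
    (A : Matrix n n R) (μ : R) :
    Module.End.HasEigenvalue (toLin' A) μ ↔ A.charpoly.IsRoot μ := by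
  rw [Module.End.hasEigenvalue_iff_isRoot_charpoly, charpoly_toLin']

theorem det_aeval_eq_zero_iff {K : Type*} [Field K] {A : Matrix n n K}
    (hA : A.charpoly.Splits) (q : K[X]) :
    (aeval A q).det = 0 ↔ ∃ x, A.charpoly.IsRoot x ∧ q.IsRoot x := by
  rw [← not_iff_not, ← ne_eq, ← isUnit_iff_ne_zero, ← isUnit_iff_isUnit_det]
  constructor
  · rintro hunit ⟨x, hxA, hxq⟩
    have hx : x ∈ spectrum K A := mem_spectrum_iff_isRoot_charpoly.mpr hxA
    have h0 : q.eval x ∈ spectrum K (aeval A q) :=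
      spectrum.subset_polynomial_aeval A q ⟨x, hx, rfl⟩
    rw [hxq.eq_zero] at h0
    exact spectrum.zero_notMem K hunit h0
  · intro h
    exact isUnit_aeval_of_isCoprime
      (isCoprime_of_splits_of_forall_not_isRoot hA A.charpoly_monic.ne_zero
        fun x hxA hxq => h ⟨x, hxA, hxq⟩)
      A.aeval_self_charpoly

theorem det_fromBlocks_map {R S : Type*} [CommRing R] [CommRing S] (f : S →+* Matrix n n R)
    (a b c d : S) : (fromBlocks (f a) (f b) (f c) (f d)).det = (f (a * d - b * c)).det := by
  let e : Fin 2 × n ≃ n ⊕ n := (finTwoEquiv.prodCongr (.refl n)).trans (Equiv.boolProdEquivSum n)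
  have hblocks : fromBlocks (f a) (f b) (f c) (f d) =
      reindex e e (Matrix.comp (Fin 2) (Fin 2) n n R (!![a, b; c, d].map f)) := by
    ext (i | i) (j | j) <;> rfl
  rw [hblocks, det_reindex_self, ← det_det, det_fin_two_of]

theorem isRoot_charpoly_fromBlocks_aeval_iff {K : Type*} [Field K] {A : Matrix n n K}
    (hA : A.charpoly.Splits) (a b c d : K[X]) (μ : K) :
    (fromBlocks (aeval A a) (aeval A b) (aeval A c) (aeval A d)).charpoly.IsRoot μ ↔
      ∃ x, A.charpoly.IsRoot x ∧ (μ - a.eval x) * (μ - d.eval x) - b.eval x * c.eval x = 0 := by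
  have hsub : scalar (n ⊕ n) μ - fromBlocks (aeval A a) (aeval A b) (aeval A c) (aeval A d) =
      fromBlocks (aeval A (C μ - a)) (aeval A (-b)) (aeval A (-c)) (aeval A (C μ - d)) := by
    ext (i | i) (j | j) <;> simp [algebraMap_matrix_apply, diagonal_apply]
  have hdet : (scalar (n ⊕ n) μ -
      fromBlocks (aeval A a) (aeval A b) (aeval A c) (aeval A d)).det =
      (aeval A ((C μ - a) * (C μ - d) - -b * -c)).det := by
    rw [hsub]
    exact det_fromBlocks_map (aeval A : K[X] →ₐ[K] Matrix n n K).toRingHom _ _ _ _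
  rw [IsRoot.def, eval_charpoly, hdet, det_aeval_eq_zero_iff hA]
  simp [IsRoot.def]

theorem piace_block_matrix_eigenvalues_general {k K : Type*} [Field k] [Field K] [Algebra k K]
    (L : Matrix n n k) (hL : L.charpoly.Splits) (α KP KI : k) (M : Matrix (n ⊕ n) (n ⊕ n) k)
    (hM : M = fromBlocks (KP • L + α • (1 : Matrix n n k)) (-(KI • L)) (KI • L) 0) (μ : K) :
    Module.End.HasEigenvalue (toLin' (M.map (algebraMap k K))) μ ↔
      ∃ lam : k, Module.End.HasEigenvalue (toLin' L) lam ∧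
        μ ^ 2 - algebraMap k K (α + KP * lam) * μ + algebraMap k K (KI * lam) ^ 2 = 0 := by
  set φ := algebraMap k K
  have hMφ : M.map φ = fromBlocks
      (aeval (L.map φ) (C (φ KP) * X + C (φ α))) (aeval (L.map φ) (-(C (φ KI) * X)))
      (aeval (L.map φ) (C (φ KI) * X)) (aeval (L.map φ) (0 : K[X])) := by
    subst hM
    ext (i | i) (j | j) <;>
      simp [algebraMap_matrix_apply, one_apply, apply_ite φ, ← Algebra.smul_def]
  have hLφ : (L.map φ).charpoly.Splits := charpoly_map L φ ▸ hL.map φ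
  simp only [hasEigenvalue_toLin'_iff_isRoot_charpoly]
  rw [hMφ, isRoot_charpoly_fromBlocks_aeval_iff hLφ, charpoly_map,
    exists_isRoot_map_iff_of_splits φ hL L.charpoly_monic.ne_zero]
  refine exists_congr fun lam => and_congr_right fun _ => ?_
  simp only [eval_add, eval_mul, eval_neg, eval_C, eval_X, eval_zero, map_add, map_mul]
  ring_nf

end BlockMatrix

/-- **Proposition 3 of the paper.** For symmetric `L` and the PI-ACE
update matrix `M = [[K_P L + α I, -K_I L], [K_I L, 0]]`, a complex number `μ` is an
eigenvalue of `M` if and only if there is an eigenvalue `λ` of `L` with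
`μ² - (α + K_P λ) μ + (K_I λ)² = 0` (equivalently, the `2n` eigenvalues of `M` are
`φ_i ± σ_i` with `φ_i = (α + K_P λ_i)/2`, `σ_i = √(φ_i² - (K_I λ_i)²)`). -/
theorem piace_block_matrix_eigenvalues
    {n : ℕ} (L : Matrix (Fin n) (Fin n) ℝ) (hL : L.IsSymm)
    (α KP KI : ℝ)
    (M : Matrix (Fin n ⊕ Fin n) (Fin n ⊕ Fin n) ℝ)
    (hM : M = Matrix.fromBlocks (KP • L + α • (1 : Matrix (Fin n) (Fin n) ℝ))
      (-(KI • L)) (KI • L) (0 : Matrix (Fin n) (Fin n) ℝ))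
    (μ : ℂ) :
    Module.End.HasEigenvalue (Matrix.toLin' (M.map (algebraMap ℝ ℂ))) μ ↔
      ∃ lam : ℝ, Module.End.HasEigenvalue (Matrix.toLin' L) lam ∧
        μ ^ 2 - (α + KP * lam : ℝ) * μ + ((KI * lam : ℝ) : ℂ) ^ 2 = 0 := by
  exact piace_block_matrix_eigenvalues_general L (isHermitian_iff_isSymm.mpr hL).splits_charpoly
    α KP KI M hM μ
end

section
/- Let L ∈ ℝ^{n×n} be the Laplacian of a connected graph, i.e. symmetric positive semidefinite with zero as an algebraically simple eigenvalue whose eigenspace is span{1ₙ}, and let α, K_P, K_I > 0. Then the block matrix M = [[K_P L + α Iₙ, −K_I L],[K_I L, 0_{n×n}]] has zero as an algebraically simple eigenvalue, and every other eigenvalue μ ∈ ℂ of M satisfies Re μ > 0. -/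
open Matrix BigOperators

/-!
If `A + Aᴴ` is positive definite, the saddle-point matrix `S = [[A, -Bᴴ], [B, 0]]` satisfies the
energy identity `Re ⟨v, S v⟩ = Re ⟨x, A x⟩` for `v = (x, y)`, its off-diagonal part being
skew-adjoint. An eigenvector for `μ` thus has `Re μ ‖v‖² = Re ⟨x, A x⟩`, which is positive unless
`x = 0`; in that case `B x = μ y` forces `μ = 0`. The same identity shows that `ker S` consists of
the vectors `(0, y)` with `Bᴴ y = 0`; if `S v` is such a vector, it is `(0, B x)` with `Bᴴ B x = 0`,
so `B x = 0`. Hence `ker S² = ker S`, and the algebraic multiplicity of zero is `dim ker Bᴴ`.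
The PI-ACE matrix is the case `A = K_P L + α I`, `B = K_I L`.
-/

section CharpolyRootMultiplicity

lemma maxGenEigenspace_zero_eq_ker {K V : Type*} [Field K] [AddCommGroup V] [Module K V]
    {f : Module.End K V} (hf : ∀ v, f (f v) = 0 → f v = 0) :
    f.maxGenEigenspace 0 = LinearMap.ker f := by
  refine le_antisymm (fun v hv ↦ ?_) (f.eigenspace_zero ▸ Module.End.eigenspace_le_maxGenEigenspace)
  have hker : LinearMap.ker (f ^ 1) = LinearMap.ker (f ^ 2) := by
    ext v
    simpa [pow_two] using ⟨fun h ↦ by simp [h], hf v⟩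
  obtain ⟨k, hk⟩ := (f.mem_maxGenEigenspace 0 v).1 hv
  rw [zero_smul, sub_zero] at hk
  rw [← pow_one f, Module.End.ker_pow_constant hker k, LinearMap.mem_ker, pow_add,
    Module.End.mul_apply, hk, map_zero]

variable {n : Type*} [Fintype n] [DecidableEq n]

lemma rootMultiplicity_zero_charpoly_eq_finrank_ker {K : Type*} [Field K] {A : Matrix n n K}
    (hA : ∀ v, A *ᵥ (A *ᵥ v) = 0 → A *ᵥ v = 0) :
    A.charpoly.rootMultiplicity 0 = Module.finrank K (LinearMap.ker A.mulVecLin) := by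
  rw [← maxGenEigenspace_zero_eq_ker (f := A.mulVecLin) hA, LinearMap.finrank_maxGenEigenspace_eq,
    charpoly_mulVecLin]

lemma rootMultiplicity_zero_charpoly_of_isHermitian {𝕜 : Type*} [RCLike 𝕜] {A : Matrix n n 𝕜}
    (hA : A.IsHermitian) :
    A.charpoly.rootMultiplicity 0 = Module.finrank 𝕜 (LinearMap.ker A.mulVecLin) := by
  open scoped ComplexOrder in
  refine rootMultiplicity_zero_charpoly_eq_finrank_ker fun v hv ↦ ?_
  exact (conjTranspose_mul_self_mulVec_eq_zero A v).1 (by rwa [hA.eq, ← mulVec_mulVec])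

lemma rootMultiplicity_charpoly_map {R S : Type*} [CommRing R] [CommRing S] {f : R →+* S}
    (hf : Function.Injective f) (A : Matrix n n R) (a : R) :
    (A.map f).charpoly.rootMultiplicity (f a) = A.charpoly.rootMultiplicity a := by
  rw [charpoly_map, ← Polynomial.eq_rootMultiplicity_map hf]

end CharpolyRootMultiplicity

open scoped MatrixOrder ComplexOrder in
lemma posSemidef_map_algebraMap {𝕜 n : Type*} [RCLike 𝕜] [Finite n] {A : Matrix n n ℝ}
    (hA : A.PosSemidef) : (A.map (algebraMap ℝ 𝕜)).PosSemidef := by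
  classical
  have := Fintype.ofFinite n
  obtain ⟨B, rfl⟩ := CStarAlgebra.nonneg_iff_eq_star_mul_self.mp hA.nonneg
  rw [Matrix.map_mul, star_eq_conjTranspose, conjTranspose_map _ (fun _ ↦ by simp)]
  exact posSemidef_conjTranspose_mul_self _

/-- A matrix is strictly accretive if its Hermitian part `(A + Aᴴ) / 2` is positive definite;
this is encoded through the real part of the quadratic form, so `A` need not be Hermitian. -/
def IsStrictlyAccretive {𝕜 n : Type*} [RCLike 𝕜] [Fintype n] (A : Matrix n n 𝕜) : Prop :=
  ∀ x ≠ 0, 0 < RCLike.re (star x ⬝ᵥ A *ᵥ x)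

/-- The saddle-point matrix `[[A, -Bᴴ], [B, 0]]`, with the sign convention that makes its
off-diagonal part skew-adjoint. It abstracts the block structure of the PI-ACE matrix. -/
def saddlePointMatrix {R m n : Type*} [Zero R] [Neg R] [Star R] (A : Matrix m m R)
    (B : Matrix n m R) : Matrix (m ⊕ n) (m ⊕ n) R :=
  fromBlocks A (-Bᴴ) B 0

namespace saddlePointMatrix

variable {m n : Type*} [Fintype m] [Fintype n]

lemma mulVec_eq {R : Type*} [NonUnitalNonAssocRing R] [Star R] (A : Matrix m m R)
    (B : Matrix n m R) (v : m ⊕ n → R) :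
    saddlePointMatrix A B *ᵥ v =
      Sum.elim (A *ᵥ (v ∘ Sum.inl) - Bᴴ *ᵥ (v ∘ Sum.inr)) (B *ᵥ (v ∘ Sum.inl)) := by
  simp [saddlePointMatrix, fromBlocks_mulVec, neg_mulVec, sub_eq_add_neg]

variable {𝕜 : Type*} [RCLike 𝕜]

lemma re_dotProduct_mulVec (A : Matrix m m 𝕜) (B : Matrix n m 𝕜) (v : m ⊕ n → 𝕜) :
    RCLike.re (star v ⬝ᵥ saddlePointMatrix A B *ᵥ v) =
      RCLike.re (star (v ∘ Sum.inl) ⬝ᵥ A *ᵥ (v ∘ Sum.inl)) := by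
  have hadj (x : m → 𝕜) (y : n → 𝕜) : star x ⬝ᵥ Bᴴ *ᵥ y = star (star y ⬝ᵥ B *ᵥ x) := by
    rw [star_dotProduct, star_mulVec, dotProduct_mulVec, conjTranspose_conjTranspose]
  calc RCLike.re (star v ⬝ᵥ saddlePointMatrix A B *ᵥ v)
      = RCLike.re (star (v ∘ Sum.inl) ⬝ᵥ (A *ᵥ (v ∘ Sum.inl) - Bᴴ *ᵥ (v ∘ Sum.inr)) +
          star (v ∘ Sum.inr) ⬝ᵥ B *ᵥ (v ∘ Sum.inl)) := by rw [mulVec_eq, dotProduct_block]; rfl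
    _ = RCLike.re (star (v ∘ Sum.inl) ⬝ᵥ A *ᵥ (v ∘ Sum.inl)) := by simp [dotProduct_sub, hadj]

variable {A : Matrix m m 𝕜} {B : Matrix n m 𝕜}

lemma mulVec_eq_zero_iff (hA : IsStrictlyAccretive A) {v : m ⊕ n → 𝕜} :
    saddlePointMatrix A B *ᵥ v = 0 ↔ v ∘ Sum.inl = 0 ∧ Bᴴ *ᵥ (v ∘ Sum.inr) = 0 := by
  constructor
  · intro h
    have hinl : v ∘ Sum.inl = 0 := by
      by_contra hne
      have henergy := re_dotProduct_mulVec A B v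
      rw [h, dotProduct_zero, map_zero] at henergy
      exact (hA _ hne).ne henergy
    refine ⟨hinl, ?_⟩
    simpa [mulVec_eq, hinl] using congrArg (· ∘ Sum.inl) h
  · rintro ⟨hinl, hinr⟩
    simp [mulVec_eq, hinl, hinr]

lemma mulVec_eq_zero_of_mulVec_mulVec_eq_zero (hA : IsStrictlyAccretive A) (v : m ⊕ n → 𝕜)
    (hv : saddlePointMatrix A B *ᵥ (saddlePointMatrix A B *ᵥ v) = 0) :
    saddlePointMatrix A B *ᵥ v = 0 := by
  open scoped ComplexOrder in
  rw [mulVec_eq_zero_iff hA, mulVec_eq, Sum.elim_comp_inl, Sum.elim_comp_inr, mulVec_mulVec,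
    conjTranspose_mul_self_mulVec_eq_zero] at hv
  rw [mulVec_eq, hv.1, hv.2, Sum.elim_zero_zero]

/-- The kernel of a saddle-point matrix with strictly accretive `A` consists of the vectors `(0, y)`
with `y` in the kernel of `Bᴴ`; the equivalence drops the zero component. -/
def kerEquiv (hA : IsStrictlyAccretive A) :
    LinearMap.ker (saddlePointMatrix A B).mulVecLin ≃ₗ[𝕜] LinearMap.ker Bᴴ.mulVecLin where
  toFun v := ⟨v.1 ∘ Sum.inr, ((mulVec_eq_zero_iff hA).1 v.2).2⟩
  invFun y := ⟨Sum.elim 0 y.1, (mulVec_eq_zero_iff hA).2 ⟨rfl, y.2⟩⟩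
  map_add' _ _ := rfl
  map_smul' _ _ := rfl
  left_inv v := Subtype.ext <|
    calc (Sum.elim 0 (v.1 ∘ Sum.inr) : m ⊕ n → 𝕜)
      _ = Sum.elim (v.1 ∘ Sum.inl) (v.1 ∘ Sum.inr) := by rw [((mulVec_eq_zero_iff hA).1 v.2).1]
      _ = v.1 := Sum.elim_comp_inl_inr v.1
  right_inv _ := rfl

theorem rootMultiplicity_zero_charpoly [DecidableEq m] [DecidableEq n]
    (hA : IsStrictlyAccretive A) :
    (saddlePointMatrix A B).charpoly.rootMultiplicity 0 =
      Module.finrank 𝕜 (LinearMap.ker Bᴴ.mulVecLin) := by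
  rw [rootMultiplicity_zero_charpoly_eq_finrank_ker (mulVec_eq_zero_of_mulVec_mulVec_eq_zero hA),
    (kerEquiv hA).finrank_eq]

theorem re_pos_of_mulVec_eq_smul (hA : IsStrictlyAccretive A) {μ : 𝕜} (hμ : μ ≠ 0)
    {v : m ⊕ n → 𝕜} (hv : v ≠ 0) (h : saddlePointMatrix A B *ᵥ v = μ • v) :
    0 < RCLike.re μ := by
  open scoped ComplexOrder in
  have hinl : v ∘ Sum.inl ≠ 0 := by
    intro hinl
    have hinr : B *ᵥ (v ∘ Sum.inl) = μ • (v ∘ Sum.inr) := by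
      rw [mulVec_eq] at h
      exact congrArg (· ∘ Sum.inr) h
    rw [hinl, mulVec_zero, eq_comm, smul_eq_zero_iff_right hμ] at hinr
    exact hv (by rw [← Sum.elim_comp_inl_inr v, hinl, hinr, Sum.elim_zero_zero])
  obtain ⟨hnorm_re, hnorm_im⟩ := RCLike.pos_iff.1 (dotProduct_star_self_pos_iff.2 hv)
  have henergy : RCLike.re μ * RCLike.re (star v ⬝ᵥ v) =
      RCLike.re (star (v ∘ Sum.inl) ⬝ᵥ A *ᵥ (v ∘ Sum.inl)) := by
    rw [← re_dotProduct_mulVec A B v, h, dotProduct_smul, smul_eq_mul, RCLike.mul_re, hnorm_im,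
      mul_zero, sub_zero]
  exact pos_of_mul_pos_left (henergy ▸ hA _ hinl) hnorm_re.le

end saddlePointMatrix

open scoped ComplexOrder in
theorem piace_block_matrix_stability_general {m : Type*} [Fintype m] [DecidableEq m]
    {L : Matrix m m ℂ} (hL : L.IsHermitian) {α KP KI : ℝ}
    (hpos : (KP • L + α • (1 : Matrix m m ℂ)).PosDef) (hKI : KI ≠ 0)
    {M : Matrix (m ⊕ m) (m ⊕ m) ℂ}
    (hM : M = fromBlocks (KP • L + α • (1 : Matrix m m ℂ)) (-(KI • L)) (KI • L) 0) :
    M.charpoly.rootMultiplicity 0 = L.charpoly.rootMultiplicity 0 ∧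
      ∀ μ : ℂ, Module.End.HasEigenvalue (toLin' M) μ → μ ≠ 0 → 0 < μ.re := by
  have hA : IsStrictlyAccretive (KP • L + α • (1 : Matrix m m ℂ)) := fun _ ↦ hpos.re_dotProduct_pos
  have hB : (KI • L)ᴴ = KI • L := by rw [conjTranspose_smul, hL.eq, star_trivial]
  have hker : LinearMap.ker (KI • L).mulVecLin = LinearMap.ker L.mulVecLin := by
    ext x
    simp [hKI]
  obtain rfl : M = saddlePointMatrix (KP • L + α • 1) (KI • L) := by
    rw [hM, saddlePointMatrix, hB]
  refine ⟨?_, fun μ hμ hμ0 ↦ ?_⟩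
  · rw [saddlePointMatrix.rootMultiplicity_zero_charpoly hA, hB, hker,
      rootMultiplicity_zero_charpoly_of_isHermitian hL]
  · obtain ⟨v, hv⟩ := hμ.exists_hasEigenvector
    exact saddlePointMatrix.re_pos_of_mulVec_eq_smul hA hμ0 hv.2 hv.apply_eq_smul

/-- For the Laplacian `L` of a connected graph (symmetric PSD with
algebraically simple zero eigenvalue and eigenspace `span{1ₙ}`) and `α, K_P, K_I > 0`,
the PI-ACE update matrix `M = [[K_P L + α I, -K_I L], [K_I L, 0]]` has zero as an
algebraically simple eigenvalue and all its other eigenvalues have positive real part. -/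
theorem piace_block_matrix_stability
    {n : ℕ} (L : Matrix (Fin n) (Fin n) ℝ)
    (hPSD : L.PosSemidef)
    (hsimple : (Matrix.charpoly L).rootMultiplicity 0 = 1)
    (hker : ∀ x : Fin n → ℝ, L.mulVec x = 0 ↔ ∃ c : ℝ, x = fun _ => c)
    (α KP KI : ℝ) (hα : 0 < α) (hKP : 0 < KP) (hKI : 0 < KI)
    (M : Matrix (Fin n ⊕ Fin n) (Fin n ⊕ Fin n) ℝ)
    (hM : M = Matrix.fromBlocks (KP • L + α • (1 : Matrix (Fin n) (Fin n) ℝ))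
      (-(KI • L)) (KI • L) (0 : Matrix (Fin n) (Fin n) ℝ)) :
    (Matrix.charpoly (M.map (algebraMap ℝ ℂ))).rootMultiplicity 0 = 1 ∧
      ∀ μ : ℂ, Module.End.HasEigenvalue
          (Matrix.toLin' (M.map (algebraMap ℝ ℂ))) μ → μ ≠ 0 → 0 < μ.re := by
  open scoped ComplexOrder in
  have hLC : (L.map (algebraMap ℝ ℂ)).PosSemidef := posSemidef_map_algebraMap hPSD
  have hpos : (KP • L.map (algebraMap ℝ ℂ) + α • (1 : Matrix (Fin n) (Fin n) ℂ)).PosDef :=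
    (PosDef.one.smul hα).posSemidef_add (hLC.smul hKP.le)
  have hMC : M.map (algebraMap ℝ ℂ) =
      fromBlocks (KP • L.map (algebraMap ℝ ℂ) + α • (1 : Matrix (Fin n) (Fin n) ℂ))
        (-(KI • L.map (algebraMap ℝ ℂ))) (KI • L.map (algebraMap ℝ ℂ)) 0 := by
    rw [hM, fromBlocks_map]
    ext (i | i) (j | j) <;> simp [one_apply, apply_ite Complex.ofReal]
  obtain ⟨hmult, hre⟩ := piace_block_matrix_stability_general hLC.isHermitian hpos hKI.ne' hMC
  refine ⟨?_, hre⟩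
  rw [hmult, ← hsimple, ← map_zero (algebraMap ℝ ℂ),
    rootMultiplicity_charpoly_map (algebraMap ℝ ℂ).injective]
end

section
/- Let L = E Eᵀ be the unweighted Laplacian of a connected graph with eigenvalues 0 = λ₁ < λ₂ ≤ … ≤ λₙ. Let p^(α), p^(K_P), p^(K_I) : ℝ → ℝ be concave, differentiable, Lipschitz decoding functions with Lipschitz constants K_α, K_{K_P}, K_{K_I} > 0 and nominal values p^(α)(θ_α) = α > 0, p^(K_P)(θ_{K_P}) = K_P > 0, p^(K_I)(θ_{K_I}) = K_I > 0. Suppose the scalar injection attacks δ_α, δ_{K_P}, δ_{K_I} satisfy |δ_α| < α/K_α, |δ_{K_P}| < (α − K_α|δ_α| + λₙ K_P)/(λₙ K_{K_P}), and |δ_{K_I}| < K_I/K_{K_I}. Then, writing ᾱ = p^(α)(θ_α+δ_α), K̄_P = p^(K_P)(θ_{K_P}+δ_{K_P}), K̄_I = p^(K_I)(θ_{K_I}+δ_{K_I}), the perturbed update matrix M̄ = [[K̄_P L + ᾱ Iₙ, −K̄_I L],[K̄_I L, 0_{n×n}]] has zero as a simple eigenvalue and all other eigenvalues with positive real part, so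 the perturbed PI-ACE protocol reaches agreement; this holds for all α, K_P, K_I > 0 and independently of the codeword values θ_α, θ_{K_P}, θ_{K_I}. -/
open Matrix BigOperators

/-!
Diagonalising `L` splits the update matrix into planar modes, one for each eigenvalue `λ` of `L`,
with characteristic polynomial `X² - (K_P λ + α) X + (K_I λ)²`. When `K_I ≠ 0` and every
`K_P λ + α` is positive, a mode has the root zero exactly when `λ = 0`, and then only once; its
other roots lie in the open right half plane. Being affine in `λ`, `K_P λ + α` has only to be
checked at the two ends of `[0, λₙ]`, and the attack bounds give it there because a decoder of
Lipschitz constant `K` cannot lose more than `K |δ|`.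
-/

open scoped NNReal
open Polynomial (X C)

section Polynomial

theorem monic_quadratic {R : Type*} [CommRing R] (b c : R) : (X ^ 2 - C b * X + C c).Monic := by
  monicity!

variable {R : Type*} [CommRing R] [IsDomain R]

theorem rootMultiplicity_prod {ι : Type*} {s : Finset ι} {f : ι → Polynomial R} (x : R)
    (hf : ∀ i ∈ s, f i ≠ 0) :
    (∏ i ∈ s, f i).rootMultiplicity x = ∑ i ∈ s, (f i).rootMultiplicity x := by
  classical
  simp only [← Polynomial.count_roots]
  rw [Polynomial.roots_prod f s (Finset.prod_ne_zero_iff.2 hf), Multiset.count_bind]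
  rfl

theorem rootMultiplicity_zero_quadratic [DecidableEq R] {b : R} (hb : b ≠ 0) (c : R) :
    (X ^ 2 - C b * X + C c).rootMultiplicity 0 = if c = 0 then 1 else 0 := by
  split_ifs with hc
  · have hfactor : X ^ 2 - C b * X + C c = (X - C 0) * (X - C b) := by
      rw [hc, Polynomial.C_0]; ring
    rw [hfactor, Polynomial.rootMultiplicity_mul (mul_ne_zero
      (Polynomial.X_sub_C_ne_zero _) (Polynomial.X_sub_C_ne_zero _)),
      Polynomial.rootMultiplicity_X_sub_C, Polynomial.rootMultiplicity_X_sub_C,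
      if_pos rfl, if_neg hb.symm]
  · exact Polynomial.rootMultiplicity_eq_zero (by simpa using hc)

end Polynomial

theorem re_pos_of_quadratic_eq_zero {b c : ℝ} (hb : 0 < b) (hc : 0 ≤ c) {μ : ℂ}
    (hμ : μ ≠ 0) (h : μ ^ 2 - b * μ + c = 0) : 0 < μ.re := by
  have hre : μ.re * μ.re - μ.im * μ.im - b * μ.re + c = 0 := by
    simpa [pow_two] using congrArg Complex.re h
  have him : μ.re * μ.im + μ.im * μ.re - b * μ.im = 0 := by
    simpa [pow_two] using congrArg Complex.im h
  have hsplit : μ.im * (2 * μ.re - b) = 0 := by linear_combination him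
  rcases mul_eq_zero.1 hsplit with hreal | hpair
  · have hne : μ.re ≠ 0 := fun h0 => hμ (Complex.ext h0 hreal)
    have hsq : 0 < μ.re * μ.re := mul_self_pos.2 hne
    have hbre : b * μ.re = μ.re * μ.re + c := by
      rw [hreal] at hre
      linear_combination -hre
    exact pos_of_mul_pos_right (hbre ▸ add_pos_of_pos_of_nonneg hsq hc) hb.le
  · linarith

section BlockMatrix

variable {ι κ R : Type*} [Fintype ι] [DecidableEq ι] [Fintype κ] [DecidableEq κ] [CommRing R]

theorem charpoly_blockDiagonal (M : κ → Matrix ι ι R) :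
    (blockDiagonal M).charpoly = ∏ k, (M k).charpoly := by
  have hchar : (blockDiagonal M).charmatrix = blockDiagonal fun k => (M k).charmatrix := by
    ext ⟨i, k⟩ ⟨j, l⟩
    by_cases hkl : k = l <;>
      simp [charmatrix_apply, blockDiagonal_apply, diagonal_apply, hkl]
  simp only [Matrix.charpoly, hchar, det_blockDiagonal]

theorem charpoly_fromBlocks_diagonal (a b c d : ι → R) :
    (fromBlocks (diagonal a) (diagonal b) (diagonal c) (diagonal d)).charpoly =
      ∏ i, (!![a i, b i; c i, d i]).charpoly := by
  let e : Fin 2 × ι ≃ ι ⊕ ι :=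
    (finTwoEquiv.prodCongr (Equiv.refl ι)).trans (Equiv.boolProdEquivSum ι)
  have hblocks : fromBlocks (diagonal a) (diagonal b) (diagonal c) (diagonal d) =
      reindex e e (blockDiagonal fun i => !![a i, b i; c i, d i]) := by
    ext (i | i) (j | j) <;>
      simp [e, blockDiagonal_apply, diagonal_apply, finTwoEquiv]
  rw [hblocks, charpoly_reindex, charpoly_blockDiagonal]

/-- The update matrix `M` of the PI average consensus estimator on a graph with Laplacian `L`, with
rate `α`, proportional gain `kP` and integral gain `kI`. The estimator evolves by `-M`, so that its
stable modes are the eigenvalues of `M` with positive real part. -/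
def piUpdateMatrix (L : Matrix ι ι R) (α kP kI : R) : Matrix (ι ⊕ ι) (ι ⊕ ι) R :=
  fromBlocks (kP • L + α • 1) (-(kI • L)) (kI • L) 0

theorem charpoly_piUpdateMatrix_conj {U V : Matrix ι ι R} (hUV : U * V = 1) (D : Matrix ι ι R)
    (α kP kI : R) :
    (piUpdateMatrix (U * D * V) α kP kI).charpoly = (piUpdateMatrix D α kP kI).charpoly := by
  have hVU : V * U = 1 := mul_eq_one_comm.1 hUV
  have hconj : piUpdateMatrix (U * D * V) α kP kI =
      fromBlocks U 0 0 U * (piUpdateMatrix D α kP kI * fromBlocks V 0 0 V) := by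
    simp only [piUpdateMatrix, fromBlocks_multiply]
    congr 1 <;> simp [mul_add, add_mul, mul_assoc, hUV]
  have hinv : fromBlocks V 0 0 V * fromBlocks U 0 0 U = 1 := by
    simp [fromBlocks_multiply, hVU]
  rw [hconj, charpoly_mul_comm, mul_assoc, hinv, mul_one]

theorem charpoly_piUpdateMatrix_diagonal (d : ι → R) (α kP kI : R) :
    (piUpdateMatrix (diagonal d) α kP kI).charpoly =
      ∏ i, (X ^ 2 - C (kP * d i + α) * X + C ((kI * d i) ^ 2)) := by
  nontriviality R
  have hblocks : piUpdateMatrix (diagonal d) α kP kI =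
      fromBlocks (diagonal fun i => kP * d i + α) (diagonal fun i => -(kI * d i))
        (diagonal fun i => kI * d i) (diagonal fun _ => 0) := by
    rw [piUpdateMatrix]
    congr 1 <;> ext i j <;> by_cases hij : i = j <;> simp [hij]
  rw [hblocks, charpoly_fromBlocks_diagonal]
  refine Finset.prod_congr rfl fun i _ => ?_
  rw [charpoly_fin_two, trace_fin_two_of, det_fin_two_of]
  ring_nf

end BlockMatrix

section Hermitian

variable {ι 𝕜 : Type*} [Fintype ι] [DecidableEq ι] [RCLike 𝕜]

theorem charpoly_piUpdateMatrix {L : Matrix ι ι 𝕜} (hL : L.IsHermitian) (α kP kI : 𝕜) :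
    (piUpdateMatrix L α kP kI).charpoly =
      ∏ i, (X ^ 2 - C (kP * hL.eigenvalues i + α) * X + C ((kI * hL.eigenvalues i) ^ 2)) := by
  conv_lhs => rw [hL.spectral_theorem, Unitary.conjStarAlgAut_apply]
  rw [charpoly_piUpdateMatrix_conj (Unitary.coe_mul_star_self _),
    charpoly_piUpdateMatrix_diagonal]
  rfl

theorem rootMultiplicity_zero_charpoly_piUpdateMatrix {L : Matrix ι ι 𝕜} (hL : L.IsHermitian)
    {α kP kI : 𝕜} (hkI : kI ≠ 0) (hmode : ∀ i, kP * hL.eigenvalues i + α ≠ 0) :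
    (piUpdateMatrix L α kP kI).charpoly.rootMultiplicity 0 = L.charpoly.rootMultiplicity 0 := by
  classical
  rw [charpoly_piUpdateMatrix hL, hL.charpoly_eq,
    rootMultiplicity_prod 0 fun i _ => (monic_quadratic _ _).ne_zero,
    rootMultiplicity_prod 0 fun i _ => Polynomial.X_sub_C_ne_zero _]
  refine Finset.sum_congr rfl fun i _ => ?_
  rw [rootMultiplicity_zero_quadratic (hmode i), Polynomial.rootMultiplicity_X_sub_C]
  simp [hkI, eq_comm (a := (0 : 𝕜))]

theorem hasEigenvalue_toLin'_iff_exists_eigenvalues_eq {A : Matrix ι ι 𝕜} (hA : A.IsHermitian)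
    {μ : 𝕜} :
    Module.End.HasEigenvalue (toLin' A) μ ↔ ∃ i, (hA.eigenvalues i : 𝕜) = μ := by
  rw [Module.End.hasEigenvalue_iff_mem_spectrum, spectrum_toLin', hA.spectrum_eq_image_range]
  simp

end Hermitian

theorem nonneg_of_hasEigenvalue_toLin' {ι : Type*} [Fintype ι] [DecidableEq ι]
    {A : Matrix ι ι ℝ} (hA : A.PosSemidef) {μ : ℝ}
    (hμ : Module.End.HasEigenvalue (toLin' A) μ) : 0 ≤ μ := by
  obtain ⟨i, rfl⟩ := (hasEigenvalue_toLin'_iff_exists_eigenvalues_eq hA.1).1 hμ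
  exact hA.eigenvalues_nonneg i

theorem re_pos_of_hasEigenvalue_piUpdateMatrix {ι : Type*} [Fintype ι] [DecidableEq ι]
    {L : Matrix ι ι ℝ} (hL : L.IsHermitian) {α kP kI : ℝ}
    (hmode : ∀ i, 0 < kP * hL.eigenvalues i + α) {μ : ℂ}
    (hμ : Module.End.HasEigenvalue
      (toLin' ((piUpdateMatrix L α kP kI).map (algebraMap ℝ ℂ))) μ) (hμ0 : μ ≠ 0) :
    0 < μ.re := by
  rw [Module.End.hasEigenvalue_iff_isRoot_charpoly, charpoly_toLin', charpoly_map,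
    charpoly_piUpdateMatrix hL, Polynomial.IsRoot, Polynomial.eval_map,
    Polynomial.eval₂_finsetProd, Finset.prod_eq_zero_iff] at hμ
  obtain ⟨i, -, hi⟩ := hμ
  exact re_pos_of_quadratic_eq_zero (hmode i) (sq_nonneg (kI * hL.eigenvalues i)) hμ0
    (by simpa using hi)

theorem sub_mul_abs_le_of_lipschitzWith {f : ℝ → ℝ} {K : ℝ≥0} (hf : LipschitzWith K f)
    (θ δ : ℝ) : f θ - K * |δ| ≤ f (θ + δ) := by
  simpa [Real.dist_eq, add_comm] using hf.le_add_mul θ (θ + δ)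

theorem mul_add_pos_of_mem_Icc {R : Type*} [CommRing R] [LinearOrder R] [IsStrictOrderedRing R]
    {a p l x : R} (ha : 0 < a) (hl : 0 < p * l + a) (hx : x ∈ Set.Icc 0 l) : 0 < p * x + a := by
  rcases le_or_gt 0 p with hp | hp
  · linarith [mul_nonneg hp hx.1]
  · linarith [mul_le_mul_of_nonpos_left hx.2 hp.le]

theorem mul_lt_of_lt_div_of_nonneg {K : Type*} [Field K] [LinearOrder K] [IsStrictOrderedRing K]
    {a b c : K} (ha : 0 ≤ a) (hc : 0 ≤ c) (h : c < b / a) : a * c < b := by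
  rcases ha.eq_or_lt with rfl | hpos
  · rw [div_zero] at h
    exact absurd h hc.not_gt
  · exact (lt_div_iff₀' hpos).1 h

theorem piace_perturbed_all_parameters_stability_general
    {ι : Type*} [Fintype ι] [DecidableEq ι] {L : Matrix ι ι ℝ} (hL : L.PosSemidef) {lamN : ℝ}
    (hlamN : IsGreatest {lam : ℝ | Module.End.HasEigenvalue (toLin' L) lam} lamN)
    {pα pKP pKI : ℝ → ℝ} {Kα KKP KKI : ℝ≥0} (hpα : LipschitzWith Kα pα)
    (hpKP : LipschitzWith KKP pKP) (hpKI : LipschitzWith KKI pKI) {θα θKP θKI δα δKP δKI : ℝ}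
    (hδα : Kα * |δα| < pα θα)
    (hδKP : lamN * KKP * |δKP| < pα θα - Kα * |δα| + lamN * pKP θKP)
    (hδKI : KKI * |δKI| < pKI θKI) :
    let Mbar := (piUpdateMatrix L (pα (θα + δα)) (pKP (θKP + δKP)) (pKI (θKI + δKI))).map
      (algebraMap ℝ ℂ)
    Mbar.charpoly.rootMultiplicity 0 = L.charpoly.rootMultiplicity 0 ∧
      ∀ μ : ℂ, Module.End.HasEigenvalue (toLin' Mbar) μ → μ ≠ 0 → 0 < μ.re := by
  have hα := sub_mul_abs_le_of_lipschitzWith hpα θα δα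
  have hKP := sub_mul_abs_le_of_lipschitzWith hpKP θKP δKP
  have hKI := sub_mul_abs_le_of_lipschitzWith hpKI θKI δKI
  have hspec (i : ι) : hL.1.eigenvalues i ∈ Set.Icc 0 lamN :=
    ⟨hL.eigenvalues_nonneg i,
      hlamN.2 ((hasEigenvalue_toLin'_iff_exists_eigenvalues_eq hL.1).2 ⟨i, rfl⟩)⟩
  have hlam : 0 ≤ lamN := nonneg_of_hasEigenvalue_toLin' hL hlamN.1
  have hmode (i : ι) : 0 < pKP (θKP + δKP) * hL.1.eigenvalues i + pα (θα + δα) := by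
    refine mul_add_pos_of_mem_Icc (by linarith) ?_ (hspec i)
    linarith [mul_le_mul_of_nonneg_left hKP hlam]
  refine ⟨?_, fun μ => re_pos_of_hasEigenvalue_piUpdateMatrix hL.1 hmode⟩
  rw [charpoly_map, ← (algebraMap ℝ ℂ).map_zero,
    ← Polynomial.eq_rootMultiplicity_map (algebraMap ℝ ℂ).injective]
  exact rootMultiplicity_zero_charpoly_piUpdateMatrix hL.1 (by linarith) fun i => (hmode i).ne'

/-- **Theorem 4 of the paper.** For the unweighted Laplacian `L` of a
connected graph with largest eigenvalue `λₙ`, and concave, differentiable, Lipschitz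
decoding functions for the three PI-ACE parameters with nominal values
`α, K_P, K_I > 0`, any injection attacks `δ_α, δ_{K_P}, δ_{K_I}` satisfying
`|δ_α| < α/K_α`, `|δ_{K_P}| < (α - K_α|δ_α| + λₙ K_P)/(λₙ K_{K_P})`, and
`|δ_{K_I}| < K_I/K_{K_I}` leave the perturbed update matrix `M̄` with a simple zero
eigenvalue and all other eigenvalues in the open right half plane, independently of
the codewords. -/
theorem piace_perturbed_all_parameters_stability
    {n m : ℕ} (Em : Matrix (Fin n) (Fin m) ℝ)
    (hinc : ∀ k : Fin m, ∃ i j : Fin n, i ≠ j ∧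
      ∀ l, Em l k = (if l = i then (1 : ℝ) else 0) - (if l = j then 1 else 0))
    (L : Matrix (Fin n) (Fin n) ℝ)
    (hL : L = Em * Em.transpose)
    -- connectivity: simple zero eigenvalue with eigenspace `span{1ₙ}`
    (hker : ∀ x : Fin n → ℝ, L.mulVec x = 0 ↔ ∃ c : ℝ, x = fun _ => c)
    (hsimple : (Matrix.charpoly L).rootMultiplicity 0 = 1)
    -- largest eigenvalue `λₙ` of `L`
    (lamN : ℝ)
    (hlamN : IsGreatest {lam : ℝ | Module.End.HasEigenvalue (Matrix.toLin' L) lam} lamN)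
    -- decoding functions for the three parameters
    (pα pKP pKI : ℝ → ℝ) (Kα KKP KKI : ℝ)
    (hKα : 0 < Kα) (hKKP : 0 < KKP) (hKKI : 0 < KKI)
    (hpα_diff : Differentiable ℝ pα) (hpα_conc : ConcaveOn ℝ Set.univ pα)
    (hpα_lip : ∀ η : ℝ, |deriv pα η| ≤ Kα)
    (hpKP_diff : Differentiable ℝ pKP) (hpKP_conc : ConcaveOn ℝ Set.univ pKP)
    (hpKP_lip : ∀ η : ℝ, |deriv pKP η| ≤ KKP)
    (hpKI_diff : Differentiable ℝ pKI) (hpKI_conc : ConcaveOn ℝ Set.univ pKI)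
    (hpKI_lip : ∀ η : ℝ, |deriv pKI η| ≤ KKI)
    -- nominal parameter values
    (θα θKP θKI : ℝ) (α KP KI : ℝ)
    (hα : 0 < α) (hKP : 0 < KP) (hKI : 0 < KI)
    (hθα : pα θα = α) (hθKP : pKP θKP = KP) (hθKI : pKI θKI = KI)
    -- attack bounds
    (δα δKP δKI : ℝ)
    (hδα : |δα| < α / Kα)
    (hδKP : |δKP| < (α - Kα * |δα| + lamN * KP) / (lamN * KKP))
    (hδKI : |δKI| < KI / KKI)
    (Mbar : Matrix (Fin n ⊕ Fin n) (Fin n ⊕ Fin n) ℝ)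
    (hMbar : Mbar = Matrix.fromBlocks
      (pKP (θKP + δKP) • L + pα (θα + δα) • (1 : Matrix (Fin n) (Fin n) ℝ))
      (-(pKI (θKI + δKI) • L)) (pKI (θKI + δKI) • L)
      (0 : Matrix (Fin n) (Fin n) ℝ)) :
    (Matrix.charpoly (Mbar.map (algebraMap ℝ ℂ))).rootMultiplicity 0 = 1 ∧
      ∀ μ : ℂ, Module.End.HasEigenvalue
          (Matrix.toLin' (Mbar.map (algebraMap ℝ ℂ))) μ → μ ≠ 0 → 0 < μ.re := by
  subst hMbar hθα hθKP hθKI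
  have hpsd : L.PosSemidef := hL ▸ Matrix.posSemidef_self_mul_conjTranspose Em
  have hlam : 0 ≤ lamN := nonneg_of_hasEigenvalue_toLin' hpsd hlamN.1
  have hlip {f : ℝ → ℝ} {K : ℝ≥0} (hf : Differentiable ℝ f) (hK : ∀ η, |deriv f η| ≤ K) :
      LipschitzWith K f := lipschitzWith_of_nnnorm_deriv_le hf hK
  lift Kα to ℝ≥0 using hKα.le
  lift KKP to ℝ≥0 using hKKP.le
  lift KKI to ℝ≥0 using hKKI.le
  rw [← hsimple]
  exact piace_perturbed_all_parameters_stability_general hpsd hlamN (hlip hpα_diff hpα_lip)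
    (hlip hpKP_diff hpKP_lip) (hlip hpKI_diff hpKI_lip)
    (mul_lt_of_lt_div_of_nonneg hKα.le (abs_nonneg _) hδα)
    (mul_lt_of_lt_div_of_nonneg (by positivity) (abs_nonneg _) hδKP)
    (mul_lt_of_lt_div_of_nonneg hKKI.le (abs_nonneg _) hδKI)
end

section
/- Let L ∈ ℝ^{n×n} be symmetric positive semidefinite with zero as a simple eigenvalue, and with eigenvalues 0 = λ₁ < λ₂ ≤ … ≤ λₙ. Let a, k_P, k_I ∈ ℝ satisfy a > 0, a + λ_i k_P > 0 for all i = 1,…,n, and k_I ≠ 0. Then the matrix M = [[k_P L + a Iₙ, −k_I L],[k_I L, 0_{n×n}]] has zero as an algebraically simple eigenvalue and all of its other eigenvalues μ ∈ ℂ satisfy Re μ > 0. -/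
open Matrix BigOperators

/-!
For `μ ≠ 0`, eliminating the lower right block of `μ - M` gives
`det (μ - M) = det (μ² - μ (a + k_P L) + (k_I L)²)`. The matrix on the right is a polynomial in `L`;
splitting that polynomial into linear factors over the algebraic closure shows that its determinant
is the product of `μ² - μ (a + k_P d) + (k_I d)²` over the eigenvalues `d` of `L`.
A factor vanishes at `0` only if `d = 0`, and it is then `μ (μ - a)`.
A nonzero root `μ` of a factor satisfies `(|μ|² + (k_I d)²) Re μ = (a + k_P d) |μ|²`.
-/

section Determinant

variable {m n R : Type*} [Fintype m] [DecidableEq m] [Fintype n] [DecidableEq n] [CommRing R]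

lemma pow_card_mul_det_fromBlocks_smul_one (r : R) (A : Matrix m m R) (B : Matrix m n R)
    (C : Matrix n m R) :
    r ^ Fintype.card m * (fromBlocks A B C (r • (1 : Matrix n n R))).det =
      r ^ Fintype.card n * (r • A - B * C).det := by
  have elimination : fromBlocks A B C (r • (1 : Matrix n n R)) *
      fromBlocks (r • (1 : Matrix m m R)) 0 (-C) 1 =
      fromBlocks (r • A - B * C) B 0 (r • (1 : Matrix n n R)) := by
    simp [fromBlocks_multiply, sub_eq_add_neg]
  have det_elimination := congrArg det elimination
  simp only [det_mul, det_fromBlocks_zero₁₂, det_fromBlocks_zero₂₁, det_smul, det_one,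
    mul_one] at det_elimination
  rw [mul_comm, det_elimination, mul_comm]

variable [IsDomain R] {A : Matrix n n R}

lemma det_add_scalar_eq_prod_roots_charpoly (hA : A.charpoly.Splits) (r : R) :
    (A + scalar n r).det = (A.charpoly.roots.map (· + r)).prod := by
  have hcard : A.charpoly.roots.card = Fintype.card n := by
    rw [← hA.natDegree_eq_card_roots, charpoly_natDegree_eq_dim]
  calc (A + scalar n r).det
      = (-1) ^ Fintype.card n * (scalar n (-r) - A).det := by
        rw [← det_neg, neg_sub, map_neg, sub_neg_eq_add]
    _ = (-1) ^ Fintype.card n * (A.charpoly.roots.map (-r - ·)).prod := by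
        rw [← eval_charpoly, hA.eval_eq_prod_roots_of_monic A.charpoly_monic]
    _ = (A.charpoly.roots.map (· + r)).prod := by
        rw [← hcard, ← Multiset.card_map (-r - ·), ← Multiset.prod_map_neg, Multiset.map_map]
        exact congrArg Multiset.prod (Multiset.map_congr rfl fun d _ => by simp [add_comm])

lemma det_aeval_eq_prod_roots_charpoly (hA : A.charpoly.Splits) {p : Polynomial R}
    (hp : p.Splits) :
    (Polynomial.aeval A p).det = (A.charpoly.roots.map p.eval).prod := by
  induction hp using Submonoid.closure_induction with
  | mem p hp =>
    rcases hp with ⟨r, rfl⟩ | ⟨r, rfl⟩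
    · simp [algebraMap_eq_diagonal, ← hA.natDegree_eq_card_roots, charpoly_natDegree_eq_dim]
    · simpa [algebraMap_eq_diagonal, Pi.algebraMap_def] using
        det_add_scalar_eq_prod_roots_charpoly hA r
  | one => simp
  | mul p q _ _ ihp ihq =>
    simp only [map_mul, det_mul, ihp, ihq, Polynomial.eval_mul, Multiset.prod_map_mul]

end Determinant

open Polynomial in
lemma rootMultiplicity_multiset_prod {R : Type*} [CommRing R] [IsDomain R] {s : Multiset R[X]}
    (hs : 0 ∉ s) (r : R) :
    s.prod.rootMultiplicity r = (s.map (rootMultiplicity r)).sum := by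
  classical
  simp only [← count_roots, roots_multiset_prod s hs, Multiset.count_bind]

lemma re_pos_of_sq_sub_mul_add_eq_zero {s p : ℝ} (hs : 0 < s) (hp : 0 ≤ p) {μ : ℂ} (hμ : μ ≠ 0)
    (h : μ ^ 2 - s * μ + p = 0) : 0 < μ.re := by
  have hnorm : 0 < Complex.normSq μ := Complex.normSq_pos.mpr hμ
  have hconj : μ * Complex.normSq μ - s * Complex.normSq μ + p * (starRingEnd ℂ) μ = 0 := by
    linear_combination (starRingEnd ℂ) μ * h + (μ - s) * (Complex.mul_conj μ).symm
  have hre : μ.re * (Complex.normSq μ + p) = s * Complex.normSq μ := by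
    have hre_conj := congrArg Complex.re hconj
    simp only [Complex.add_re, Complex.sub_re, Complex.re_mul_ofReal, Complex.re_ofReal_mul,
      Complex.ofReal_re, Complex.conj_re, Complex.zero_re] at hre_conj
    linear_combination hre_conj
  exact pos_of_mul_pos_left (hre ▸ mul_pos hs hnorm) (by positivity)

section SecondOrderUpdate

open Polynomial

variable {n R : Type*} [DecidableEq n] [CommRing R]

/-- The update matrix `[[k_P L + a I, -k_I L], [k_I L, 0]]` of a second-order (PI-ACE type)
method. -/
def secondOrderUpdateMatrix (a kP kI : R) (L : Matrix n n R) : Matrix (n ⊕ n) (n ⊕ n) R :=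
  fromBlocks (kP • L + a • (1 : Matrix n n R)) (-(kI • L)) (kI • L) 0

/-- The factor that an eigenvalue `d` of `L` contributes to the characteristic polynomial of
`secondOrderUpdateMatrix a kP kI L`; its roots are the two eigenvalues `φ ± √(φ² - (k_I d)²)`
with `φ = (a + k_P d) / 2`. -/
noncomputable def secondOrderUpdateFactor (a kP kI d : R) : R[X] :=
  X ^ 2 - C (a + d * kP) * X + C ((kI * d) ^ 2)

namespace secondOrderUpdateFactor

lemma eval_eq (a kP kI d t : R) :
    (secondOrderUpdateFactor a kP kI d).eval t = t ^ 2 - (a + d * kP) * t + (kI * d) ^ 2 := by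
  simp [secondOrderUpdateFactor]

lemma map_eq {S : Type*} [CommRing S] (f : R →+* S) (a kP kI d : R) :
    (secondOrderUpdateFactor a kP kI d).map f =
      secondOrderUpdateFactor (f a) (f kP) (f kI) (f d) := by
  simp [secondOrderUpdateFactor]

lemma monic [Nontrivial R] (a kP kI d : R) :
    (secondOrderUpdateFactor a kP kI d).Monic := by
  unfold secondOrderUpdateFactor
  monicity!

lemma rootMultiplicity_zero [IsDomain R] {a kP kI d : R} (hkI : kI ≠ 0)
    (ha : d = 0 → a ≠ 0) :
    (secondOrderUpdateFactor a kP kI d).rootMultiplicity 0 =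
      (X - C d).rootMultiplicity 0 := by
  rcases eq_or_ne d 0 with rfl | hd
  · have factorization : secondOrderUpdateFactor a kP kI 0 = (X - C 0) * (X - C a) := by
      simp only [secondOrderUpdateFactor, map_zero, zero_mul, mul_zero, add_zero, ne_eq,
        OfNat.ofNat_ne_zero, not_false_eq_true, zero_pow]
      ring
    have not_root : ¬ (X - C a).IsRoot 0 := by simpa using ha rfl
    rw [factorization, rootMultiplicity_mul (mul_ne_zero (X_sub_C_ne_zero 0) (X_sub_C_ne_zero a)),
      rootMultiplicity_eq_zero not_root, add_zero]
  · rw [rootMultiplicity_eq_zero, rootMultiplicity_eq_zero]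
    · simpa using hd
    · simpa [eval_eq] using ⟨hkI, hd⟩

end secondOrderUpdateFactor

namespace secondOrderUpdateMatrix

lemma map_eq {S : Type*} [CommRing S] (f : R →+* S) (a kP kI : R) (L : Matrix n n R) :
    (secondOrderUpdateMatrix a kP kI L).map f =
      secondOrderUpdateMatrix (f a) (f kP) (f kI) (L.map f) := by
  simp [secondOrderUpdateMatrix, fromBlocks_map, Matrix.map_add, Matrix.map_smul', Matrix.map_neg]

variable [Fintype n]

lemma eval_charpoly_eq_det_aeval [IsDomain R] (a kP kI : R) (L : Matrix n n R) {t : R}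
    (ht : t ≠ 0) :
    (secondOrderUpdateMatrix a kP kI L).charpoly.eval t =
      (aeval L (C (kI ^ 2) * X ^ 2 - C (kP * t) * X + C (t ^ 2 - a * t))).det := by
  have blocks : scalar (n ⊕ n) t - secondOrderUpdateMatrix a kP kI L =
      fromBlocks ((t - a) • 1 - kP • L) (kI • L) (-(kI • L)) (t • 1) := by
    rw [scalar_apply, ← smul_one_eq_diagonal, ← fromBlocks_one, fromBlocks_smul,
      secondOrderUpdateMatrix, sub_eq_add_neg, fromBlocks_neg, fromBlocks_add]
    congr 1 <;> module
  have schur : t • ((t - a) • 1 - kP • L) - kI • L * -(kI • L) =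
      aeval L (C (kI ^ 2) * X ^ 2 - C (kP * t) * X + C (t ^ 2 - a * t)) := by
    simp only [mul_neg, Algebra.mul_smul_comm, Algebra.smul_mul_assoc, sub_neg_eq_add, pow_two,
      map_mul, map_sub, map_add, aeval_C, Algebra.algebraMap_eq_smul_one, mul_one, aeval_X,
      one_mul]
    module
  have elimination := pow_card_mul_det_fromBlocks_smul_one t ((t - a) • 1 - kP • L) (kI • L)
    (-(kI • L))
  rw [eval_charpoly, blocks, mul_left_cancel₀ (pow_ne_zero _ ht) elimination, schur]

variable {K : Type*} [Field K] {L : Matrix n n K}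

lemma charpoly_of_isAlgClosed [IsAlgClosed K] (a kP kI : K) (L : Matrix n n K) :
    (secondOrderUpdateMatrix a kP kI L).charpoly =
      (L.charpoly.roots.map (secondOrderUpdateFactor a kP kI)).prod := by
  refine eq_of_infinite_eval_eq _ _ ((Set.finite_singleton (0 : K)).infinite_compl.mono ?_)
  intro t ht
  rw [Set.mem_ofPred_eq, eval_charpoly_eq_det_aeval a kP kI L ht,
    det_aeval_eq_prod_roots_charpoly (IsAlgClosed.splits _) (IsAlgClosed.splits _),
    eval_multiset_prod, Multiset.map_map]
  congr! 2 with d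
  simp only [Function.comp_apply, secondOrderUpdateFactor.eval_eq, eval_add, eval_sub, eval_mul,
    eval_pow, eval_C, eval_X]
  ring

theorem charpoly_of_splits (hL : L.charpoly.Splits) (a kP kI : K) :
    (secondOrderUpdateMatrix a kP kI L).charpoly =
      (L.charpoly.roots.map (secondOrderUpdateFactor a kP kI)).prod := by
  let ι := algebraMap K (AlgebraicClosure K)
  apply map_injective ι ι.injective
  rw [← charpoly_map, map_eq, charpoly_of_isAlgClosed, charpoly_map, hL.roots_map,
    Polynomial.map_multiset_prod, Multiset.map_map, Multiset.map_map]
  simp only [Function.comp_def, secondOrderUpdateFactor.map_eq]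

theorem rootMultiplicity_zero_charpoly (hL : L.charpoly.Splits) {a kP kI : K} (hkI : kI ≠ 0)
    (ha : L.charpoly.IsRoot 0 → a ≠ 0) :
    (secondOrderUpdateMatrix a kP kI L).charpoly.rootMultiplicity 0 =
      L.charpoly.rootMultiplicity 0 := by
  conv_rhs => rw [hL.eq_prod_roots_of_monic L.charpoly_monic]
  rw [charpoly_of_splits hL, rootMultiplicity_multiset_prod, rootMultiplicity_multiset_prod,
    Multiset.map_map, Multiset.map_map]
  · refine congrArg Multiset.sum (Multiset.map_congr rfl fun d hd => ?_)
    exact secondOrderUpdateFactor.rootMultiplicity_zero hkI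
      fun hd0 => ha (hd0 ▸ isRoot_of_mem_roots hd)
  · simp [X_sub_C_ne_zero]
  · simp [(secondOrderUpdateFactor.monic a kP kI _).ne_zero]

theorem re_pos_of_isRoot_charpoly {L : Matrix n n ℝ} (hL : L.charpoly.Splits) {a kP kI : ℝ}
    (hshift : ∀ d, L.charpoly.IsRoot d → 0 < a + d * kP) {μ : ℂ} (hμ : μ ≠ 0)
    (hroot : ((secondOrderUpdateMatrix a kP kI L).map (algebraMap ℝ ℂ)).charpoly.IsRoot μ) :
    0 < μ.re := by
  rw [charpoly_map, charpoly_of_splits hL, Polynomial.map_multiset_prod, Multiset.map_map,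
    IsRoot, eval_multiset_prod, Multiset.prod_eq_zero_iff, Multiset.map_map,
    Multiset.mem_map] at hroot
  obtain ⟨d, hd, hdμ⟩ := hroot
  refine re_pos_of_sq_sub_mul_add_eq_zero (hshift d (isRoot_of_mem_roots hd))
    (sq_nonneg (kI * d)) hμ ?_
  simpa [secondOrderUpdateFactor] using hdμ

end secondOrderUpdateMatrix

end SecondOrderUpdate

theorem second_order_update_matrix_stability_general {n : Type*} [Fintype n] [DecidableEq n]
    {L : Matrix n n ℝ} (hL : L.charpoly.Splits) {a kP kI : ℝ}
    (hshift : ∀ d : ℝ, Module.End.HasEigenvalue (toLin' L) d → 0 < a + d * kP) (hkI : kI ≠ 0) :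
    ((secondOrderUpdateMatrix a kP kI L).map (algebraMap ℝ ℂ)).charpoly.rootMultiplicity 0 =
        L.charpoly.rootMultiplicity 0 ∧
      ∀ μ : ℂ, Module.End.HasEigenvalue
        (toLin' ((secondOrderUpdateMatrix a kP kI L).map (algebraMap ℝ ℂ))) μ →
          μ ≠ 0 → 0 < μ.re := by
  simp only [Module.End.hasEigenvalue_iff_isRoot_charpoly, charpoly_toLin'] at hshift ⊢
  refine ⟨?_, fun μ hroot hμ =>
    secondOrderUpdateMatrix.re_pos_of_isRoot_charpoly hL hshift hμ hroot⟩
  have ha : L.charpoly.IsRoot 0 → a ≠ 0 := fun h0 => by simpa using (hshift 0 h0).ne'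
  rw [charpoly_map, ← map_zero (algebraMap ℝ ℂ),
    ← Polynomial.eq_rootMultiplicity_map (algebraMap ℝ ℂ).injective,
    secondOrderUpdateMatrix.rootMultiplicity_zero_charpoly hL hkI ha]

/-- For a symmetric PSD matrix `L` with algebraically simple zero
eigenvalue, and scalars `a > 0`, `k_P` with `a + λ k_P > 0` for every eigenvalue `λ`
of `L`, and `k_I ≠ 0`, the block matrix `M = [[k_P L + a I, -k_I L],[k_I L, 0]]` has
zero as an algebraically simple eigenvalue and all other eigenvalues with positive
real part. -/
theorem second_order_update_matrix_stability
    {n : ℕ} (L : Matrix (Fin n) (Fin n) ℝ)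
    (hPSD : L.PosSemidef)
    (hsimple : (Matrix.charpoly L).rootMultiplicity 0 = 1)
    (a kP kI : ℝ) (ha : 0 < a)
    (hshift : ∀ lam : ℝ, Module.End.HasEigenvalue (Matrix.toLin' L) lam →
      0 < a + lam * kP)
    (hkI : kI ≠ 0)
    (M : Matrix (Fin n ⊕ Fin n) (Fin n ⊕ Fin n) ℝ)
    (hM : M = Matrix.fromBlocks (kP • L + a • (1 : Matrix (Fin n) (Fin n) ℝ))
      (-(kI • L)) (kI • L) (0 : Matrix (Fin n) (Fin n) ℝ)) :
    (Matrix.charpoly (M.map (algebraMap ℝ ℂ))).rootMultiplicity 0 = 1 ∧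
      ∀ μ : ℂ, Module.End.HasEigenvalue
          (Matrix.toLin' (M.map (algebraMap ℝ ℂ))) μ → μ ≠ 0 → 0 < μ.re := by
  subst hM
  exact hsimple ▸ second_order_update_matrix_stability_general
    hPSD.isHermitian.splits_charpoly hshift hkI
end

section
/- Let L = E W Eᵀ be the Laplacian of a connected weighted graph G with positive edge weights, maximum weighted degree Ψ_G, a fixed edge (u,v) with effective resistance R_uv(G), and a decoding function p_uv that is concave, differentiable, and Lipschitz with constant K_uv > 0. Fix a step size ε with 0 < ε < 1/Ψ_G. If a single-edge attack δ on (u,v) satisfies |δ| < K_uv⁻¹ · min{ R_uv(G)⁻¹, ε⁻¹ − Ψ_G }, then the perturbed discrete-time protocol x(t+1) = (Iₙ − ε L_Δ) x(t), with L_Δ = L + (p_uv(θ_uv+δ) − p_uv(θ_uv)) b bᵀ and b = e_u − e_v, reaches robust agreement (x(t) converges to a point of span{1ₙ}), independently of the codeword θ_uv. -/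
open Matrix BigOperators Filter Topology

/-!
Powers of a Hermitian matrix with eigenvalues in `(-1, 1]` converge, and the limit consists of
fixed points; for `1 - ε L_Δ` these are the kernel of `L_Δ`. Two positivity estimates put the
eigenvalues there. From below, Cauchy–Schwarz for the form of `L` and `L y = b` give
`b bᵀ ≤ R L` with `R = bᵀ y`, so `L_Δ = L + d b bᵀ` stays positive semidefinite, with the kernel
of `L`, as soon as `1 + d R > 0`. From above, signless Laplacians are positive semidefinite, which
gives `L ≤ 2Ψ` and `b bᵀ ≤ 2`, hence `ε L_Δ ≤ 2ε (Ψ + d⁺) < 2`. The Lipschitz bound turns the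
bound on the codeword deviation `δ` into the one needed on the weight deviation `d`.
-/

section Powers

open scoped ComplexOrder

theorem mul_eq_of_tendsto_pow {M : Type*} [Monoid M] [TopologicalSpace M] [T2Space M]
    [SeparatelyContinuousMul M] {a p : M} (h : Tendsto (a ^ ·) atTop (𝓝 p)) : a * p = p :=
  isFixedPt_of_tendsto_iterate (f := (a * ·)) (x := 1) (by simpa using h)
    (continuous_const_mul a).continuousAt

theorem exists_tendsto_pow_of_mem_Ioc {r : ℝ} (hr : r ∈ Set.Ioc (-1) 1) :
    ∃ l, Tendsto (r ^ ·) atTop (𝓝 l) := by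
  rcases hr.2.eq_or_lt with rfl | hr1
  · exact ⟨1, by simp⟩
  · exact ⟨0, tendsto_pow_atTop_nhds_zero_of_abs_lt_one (abs_lt.2 ⟨hr.1, hr1⟩)⟩

variable {V 𝕜 : Type*} [Fintype V] [DecidableEq V] [RCLike 𝕜]

theorem exists_tendsto_pow_of_eigenvalues_mem_Ioc {M : Matrix V V 𝕜} (hM : M.IsHermitian)
    (h : ∀ i, hM.eigenvalues i ∈ Set.Ioc (-1) 1) : ∃ P, Tendsto (M ^ ·) atTop (𝓝 P) := by
  choose l hl using fun i ↦ exists_tendsto_pow_of_mem_Ioc (h i)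
  let U := Unitary.conjStarAlgAut 𝕜 _ hM.eigenvectorUnitary
  have hpow (t : ℕ) : M ^ t = U (diagonal fun i ↦ ((hM.eigenvalues i ^ t : ℝ) : 𝕜)) := by
    conv_lhs => rw [hM.spectral_theorem, ← map_pow, diagonal_pow]
    congr; ext; simp
  have hU : Continuous U := by
    have h : ⇑U = fun X ↦ (hM.eigenvectorUnitary : Matrix V V 𝕜) * X *
        (star hM.eigenvectorUnitary : Matrix V V 𝕜) :=
      funext fun X ↦ Unitary.conjStarAlgAut_apply ..
    rw [h]
    fun_prop
  have hdiag : Tendsto (fun t i ↦ ((hM.eigenvalues i ^ t : ℝ) : 𝕜)) atTop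
      (𝓝 fun i ↦ (l i : 𝕜)) :=
    tendsto_pi_nhds.2 fun i ↦ (RCLike.continuous_ofReal.tendsto _).comp (hl i)
  refine ⟨U (diagonal fun i ↦ (l i : 𝕜)), ?_⟩
  simp only [hpow]
  exact ((hU.comp continuous_id.matrix_diagonal).tendsto _).comp hdiag

theorem eigenvalues_mem_Ioc_of_posDef_one_add {M : Matrix V V 𝕜} (hM : M.IsHermitian)
    (hadd : (1 + M).PosDef) (hsub : (1 - M).PosSemidef) (i : V) :
    hM.eigenvalues i ∈ Set.Ioc (-1) 1 := by
  let e : V → 𝕜 := ⇑(hM.eigenvectorBasis i)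
  have he : RCLike.re (star e ⬝ᵥ e) = 1 := by
    rw [dotProduct_comm, ← EuclideanSpace.inner_eq_star_dotProduct]
    simp
  have he0 : e ≠ 0 := by rintro h; simp [h] at he
  have hlo := hadd.re_dotProduct_pos he0
  have hup := hsub.re_dotProduct_nonneg e
  rw [add_mulVec, one_mulVec, dotProduct_add, map_add, ← hM.eigenvalues_eq, he] at hlo
  rw [sub_mulVec, one_mulVec, dotProduct_sub, map_sub, ← hM.eigenvalues_eq, he] at hup
  exact ⟨by linarith, by linarith⟩

theorem exists_tendsto_pow_one_sub_smul_mulVec {A : Matrix V V 𝕜} {c ε : ℝ} (hA : A.PosSemidef)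
    (hAc : (c • 1 - A).PosSemidef) (hε : 0 < ε) (hεc : ε * c < 2) (x₀ : V → 𝕜) :
    ∃ z, A *ᵥ z = 0 ∧ Tendsto (fun t : ℕ ↦ ((1 - ε • A) ^ t) *ᵥ x₀) atTop (𝓝 z) := by
  have hsub : (1 - (1 - ε • A)).PosSemidef := by
    simpa using hA.smul hε.le
  have hadd : (1 + (1 - ε • A)).PosDef := by
    have h : (1 + (1 - ε • A)) = (2 - ε * c) • 1 + ε • (c • 1 - A) := by
      simp only [sub_smul, smul_sub, smul_smul, ofNat_smul_eq_nsmul, two_nsmul]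
      abel
    rw [h]
    exact (PosDef.one.smul (sub_pos.2 hεc)).add_posSemidef (hAc.smul hε.le)
  have hM : (1 - ε • A).IsHermitian := by
    simpa using hadd.isHermitian.sub isHermitian_one
  obtain ⟨P, hP⟩ := exists_tendsto_pow_of_eigenvalues_mem_Ioc hM
    (eigenvalues_mem_Ioc_of_posDef_one_add hM hadd hsub)
  have hAP : A * P = 0 := by
    have h := mul_eq_of_tendsto_pow hP
    rw [sub_mul, one_mul, sub_eq_self, smul_mul_assoc] at h
    exact (smul_eq_zero.1 h).resolve_left hε.ne'
  refine ⟨P *ᵥ x₀, by rw [mulVec_mulVec, hAP, zero_mulVec], ?_⟩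
  exact ((continuous_id.matrix_mulVec continuous_const).tendsto P).comp hP

end Powers

section RankOne

theorem posSemidef_vecMulVec_self {V : Type*} [Finite V] (b : V → ℝ) :
    (vecMulVec b b).PosSemidef := by
  simpa using posSemidef_vecMulVec_self_star b

variable {V : Type*} [Fintype V]

theorem dotProduct_mulVec_of_isSymm {R : Type*} [CommSemiring R] {A : Matrix V V R}
    (hA : A.IsSymm) {b y : V → R} (hy : A *ᵥ y = b) (x : V → R) : y ⬝ᵥ A *ᵥ x = b ⬝ᵥ x := by
  rw [dotProduct_mulVec, ← mulVec_transpose, hA.eq, hy]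

theorem mulVec_eq_zero_of_add_smul_vecMulVec_mulVec_eq_zero {R : Type*} [CommRing R]
    [NoZeroDivisors R] {A : Matrix V V R} (hA : A.IsSymm) {b y : V → R} (hy : A *ᵥ y = b) {d : R}
    (hd : 1 + d * (b ⬝ᵥ y) ≠ 0) {z : V → R} (hz : (A + d • vecMulVec b b) *ᵥ z = 0) :
    A *ᵥ z = 0 := by
  have hAz : A *ᵥ z + (d * (b ⬝ᵥ z)) • b = 0 := by
    simpa [add_mulVec, smul_mulVec, vecMulVec_mulVec, smul_smul] using hz
  have hbz : (1 + d * (b ⬝ᵥ y)) * (b ⬝ᵥ z) = 0 := by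
    have h := congrArg (y ⬝ᵥ ·) hAz
    simp only [dotProduct_add, dotProduct_smul, dotProduct_mulVec_of_isSymm hA hy,
      dotProduct_zero, smul_eq_mul, dotProduct_comm y b] at h
    linear_combination h
  simpa [(mul_eq_zero.1 hbz).resolve_left hd] using hAz

theorem posSemidef_smul_sub_vecMulVec_self {A : Matrix V V ℝ} (hA : A.PosSemidef) {b y : V → ℝ}
    (hy : A *ᵥ y = b) : ((b ⬝ᵥ y) • A - vecMulVec b b).PosSemidef := by
  classical
  have hsymm : A.IsSymm := isHermitian_iff_isSymm.1 hA.isHermitian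
  refine .of_dotProduct_mulVec_nonneg
    ((hA.isHermitian.smul (.all _)).sub (posSemidef_vecMulVec_self b).isHermitian) fun x ↦ ?_
  have hCS := LinearMap.BilinForm.apply_sq_le_of_symm A.toBilin'
    (fun x ↦ by simpa [toBilin'_apply'] using hA.dotProduct_mulVec_nonneg x)
    (LinearMap.BilinForm.isSymm_iff.1 <| isSymm_toBilin'_iff_isSymm.2 hsymm) y x
  simp only [toBilin'_apply', dotProduct_mulVec_of_isSymm hsymm hy, hy, dotProduct_comm y b] at hCS
  simp only [star_trivial, sub_mulVec, smul_mulVec, vecMulVec_mulVec, dotProduct_sub,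
    dotProduct_smul, dotProduct_comm x b, op_smul_eq_smul, smul_eq_mul]
  linarith

theorem posSemidef_add_smul_vecMulVec_self {A : Matrix V V ℝ} (hA : A.PosSemidef) {b y : V → ℝ}
    (hy : A *ᵥ y = b) {d : ℝ} (hd : 0 ≤ 1 + d * (b ⬝ᵥ y)) :
    (A + d • vecMulVec b b).PosSemidef := by
  rcases le_total 0 d with hd0 | hd0
  · exact hA.add ((posSemidef_vecMulVec_self b).smul hd0)
  · have h : A + d • vecMulVec b b =
        (1 + d * (b ⬝ᵥ y)) • A + (-d) • ((b ⬝ᵥ y) • A - vecMulVec b b) := by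
      module
    rw [h]
    exact (hA.smul hd).add ((posSemidef_smul_sub_vecMulVec_self hA hy).smul (neg_nonneg.2 hd0))

end RankOne

section Laplacian

variable {V E : Type*} [Fintype E] [DecidableEq E]

/-- The Laplacian `B W Bᵀ` of the graph with incidence matrix `B` and edge weights `w`. -/
def weightedLaplacian (B : Matrix V E ℝ) (w : E → ℝ) : Matrix V V ℝ :=
  B * diagonal w * Bᵀ

theorem weightedLaplacian_eq_sum (B : Matrix V E ℝ) (w : E → ℝ) :
    weightedLaplacian B w = ∑ k, w k • vecMulVec (B.col k) (B.col k) := by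
  ext i j
  rw [weightedLaplacian, Matrix.mul_apply, Matrix.sum_apply]
  refine Finset.sum_congr rfl fun k _ ↦ ?_
  simp only [mul_diagonal, transpose_apply, Matrix.smul_apply, vecMulVec_apply, col_apply,
    smul_eq_mul]
  ring

theorem posSemidef_weightedLaplacian [Finite V] (B : Matrix V E ℝ) {w : E → ℝ}
    (hw : ∀ k, 0 ≤ w k) : (weightedLaplacian B w).PosSemidef := by
  rw [weightedLaplacian_eq_sum]
  exact posSemidef_sum _ fun k _ ↦ (posSemidef_vecMulVec_self _).smul (hw k)

variable [DecidableEq V]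

/-- The vector `e_u - e_v`: the incidence column of an edge joining `u` and `v`, and the zero
vector when `u = v`. -/
def edgeVec (u v : V) : V → ℝ := Pi.single u 1 - Pi.single v 1

theorem edgeVec_apply (u v i : V) :
    edgeVec u v i = (if i = u then 1 else 0) - (if i = v then 1 else 0) := by
  simp [edgeVec, Pi.single_apply]

theorem edgeVec_mul_edgeVec_nonpos (u v : V) {i j : V} (hij : i ≠ j) :
    edgeVec u v i * edgeVec u v j ≤ 0 := by
  rw [edgeVec_apply, edgeVec_apply]
  split_ifs <;> simp_all

/-- The signless counterpart `D + A` of a matrix `D - A` with diagonal part `D`. Its positivity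
bounds a Laplacian above by twice the degree matrix. -/
def signless (M : Matrix V V ℝ) : Matrix V V ℝ := (2 : ℝ) • diagonal M.diag - M

theorem signless_vecMulVec_edgeVec (u v : V) :
    signless (vecMulVec (edgeVec u v) (edgeVec u v)) =
      vecMulVec |edgeVec u v| |edgeVec u v| := by
  ext i j
  rcases eq_or_ne i j with rfl | hij
  · simp only [signless, diag_vecMulVec, Matrix.sub_apply, Matrix.smul_apply, diagonal_apply_eq,
      Pi.mul_apply, smul_eq_mul, vecMulVec_apply, Pi.abs_apply, abs_mul_abs_self]
    ring
  · simp [signless, hij, vecMulVec_apply, ← abs_mul,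
      abs_of_nonpos (edgeVec_mul_edgeVec_nonpos u v hij)]

theorem signless_weightedLaplacian (B : Matrix V E ℝ) (w : E → ℝ) :
    signless (weightedLaplacian B w) =
      ∑ k, w k • signless (vecMulVec (B.col k) (B.col k)) := by
  simp only [signless, weightedLaplacian_eq_sum, diag_sum, diag_smul, smul_sub,
    Finset.sum_sub_distrib]
  ext i j
  rcases eq_or_ne i j with rfl | hij
  · simp [Matrix.sum_apply, Finset.mul_sum, mul_left_comm]
  · simp [hij, Matrix.sum_apply]

theorem posSemidef_two_mul_smul_one_sub [Finite V] {M : Matrix V V ℝ} {c : ℝ}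
    (hM : (signless M).PosSemidef) (hc : ∀ i, M i i ≤ c) :
    ((2 * c) • 1 - M).PosSemidef := by
  have hdiag : (diagonal fun i ↦ c - M i i).PosSemidef :=
    .diagonal fun i ↦ sub_nonneg.2 (hc i)
  have h : (2 * c) • 1 - M = (2 : ℝ) • (diagonal fun i ↦ c - M i i) + signless M := by
    ext i j
    rcases eq_or_ne i j with rfl | hij
    · simp only [Matrix.sub_apply, Matrix.smul_apply, one_apply_eq, smul_eq_mul, mul_one,
        signless, Matrix.add_apply, diagonal_apply_eq, diag_apply]
      ring
    · simp [signless, hij]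
  rw [h]
  exact (hdiag.smul zero_le_two).add hM

theorem posSemidef_signless_vecMulVec_edgeVec [Finite V] (u v : V) :
    (signless (vecMulVec (edgeVec u v) (edgeVec u v))).PosSemidef := by
  rw [signless_vecMulVec_edgeVec]
  exact posSemidef_vecMulVec_self _

theorem posSemidef_signless_weightedLaplacian [Finite V] {B : Matrix V E ℝ} {w : E → ℝ}
    (hw : ∀ k, 0 ≤ w k) (hB : ∀ k, ∃ i j, B.col k = edgeVec i j) :
    (signless (weightedLaplacian B w)).PosSemidef := by
  rw [signless_weightedLaplacian]
  refine posSemidef_sum _ fun k _ ↦ .smul ?_ (hw k)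
  obtain ⟨i, j, hk⟩ := hB k
  exact hk ▸ posSemidef_signless_vecMulVec_edgeVec i j

theorem posSemidef_two_smul_one_sub_vecMulVec_edgeVec [Finite V] (u v : V) :
    ((2 : ℝ) • 1 - vecMulVec (edgeVec u v) (edgeVec u v)).PosSemidef := by
  have hdiag (i : V) : vecMulVec (edgeVec u v) (edgeVec u v) i i ≤ 1 := by
    rw [vecMulVec_apply, edgeVec_apply]
    split_ifs <;> norm_num
  simpa using posSemidef_two_mul_smul_one_sub (posSemidef_signless_vecMulVec_edgeVec u v) hdiag

theorem posSemidef_two_mul_smul_one_sub_add_smul_vecMulVec_edgeVec [Finite V]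
    {M : Matrix V V ℝ} {c : ℝ} (hM : ((2 * c) • 1 - M).PosSemidef) (u v : V) (d : ℝ) :
    ((2 * (c + d⁺)) • 1 -
      (M + d • vecMulVec (edgeVec u v) (edgeVec u v))).PosSemidef := by
  have h : (2 * (c + d⁺)) • 1 - (M + d • vecMulVec (edgeVec u v) (edgeVec u v)) =
      ((2 * c) • 1 - M) + d⁺ • ((2 : ℝ) • 1 - vecMulVec (edgeVec u v) (edgeVec u v)) +
        d⁻ • vecMulVec (edgeVec u v) (edgeVec u v) := by
    nth_rw 2 [← posPart_sub_negPart d]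
    module
  rw [h]
  exact (hM.add ((posSemidef_two_smul_one_sub_vecMulVec_edgeVec u v).smul (posPart_nonneg d))).add
    ((posSemidef_vecMulVec_self _).smul (negPart_nonneg d))

end Laplacian

section Attack

theorem abs_sub_lt_of_abs_deriv_le {p : ℝ → ℝ} {K r : ℝ} (hp : Differentiable ℝ p) (hK : 0 < K)
    (hp' : ∀ η, |deriv p η| ≤ K) {θ δ : ℝ} (hδ : |δ| < K⁻¹ * r) : |p (θ + δ) - p θ| < r := by
  have hmean : |p (θ + δ) - p θ| ≤ K * |δ| := by
    simpa using convex_univ.norm_image_sub_le_of_norm_deriv_le (fun x _ ↦ hp x)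
      (fun x _ ↦ hp' x) (Set.mem_univ θ) (Set.mem_univ (θ + δ))
  exact hmean.trans_lt ((lt_inv_mul_iff₀ hK).1 hδ)

theorem one_add_mul_pos_of_abs_lt_inv {d R : ℝ} (h : |d| < R⁻¹) : 0 < 1 + d * R := by
  have hR : 0 < R := inv_pos.1 ((abs_nonneg d).trans_lt h)
  have hdR : |d| * R < 1 := by rwa [← one_div, lt_div_iff₀ hR] at h
  have hneg : -|d| * R ≤ d * R := mul_le_mul_of_nonneg_right (neg_abs_le d) hR.le
  linarith

theorem mul_add_posPart_lt_one_of_abs_lt {d ε Ψ : ℝ} (hε : 0 < ε) (h : |d| < ε⁻¹ - Ψ) :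
    ε * (Ψ + d⁺) < 1 := by
  have hd : d⁺ ≤ |d| := sup_le (le_abs_self d) (abs_nonneg d)
  calc
    ε * (Ψ + d⁺) < ε * ε⁻¹ := mul_lt_mul_of_pos_left (by linarith) hε
    _ = 1 := mul_inv_cancel₀ hε.ne'

end Attack

theorem sbdc_discrete_time_simplified_robust_agreement_general {V E : Type*} [Fintype V]
    [DecidableEq V] [Fintype E] [DecidableEq E] {B : Matrix V E ℝ} {w : E → ℝ}
    (hB : ∀ k, ∃ i j, B.col k = edgeVec i j) (hw : ∀ k, 0 ≤ w k)
    (hker : ∀ x, weightedLaplacian B w *ᵥ x = 0 → ∃ c : ℝ, x = fun _ ↦ c)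
    {u v : V} {y : V → ℝ} (hy : weightedLaplacian B w *ᵥ y = edgeVec u v)
    {Ψ : ℝ} (hΨ : ∀ i, weightedLaplacian B w i i ≤ Ψ) {ε : ℝ} (hε : 0 < ε) {d : ℝ}
    (hdR : 0 < 1 + d * (edgeVec u v ⬝ᵥ y)) (hdΨ : ε * (Ψ + d⁺) < 1) (x₀ : V → ℝ) :
    ∃ c : ℝ, Tendsto
      (fun t : ℕ ↦ (1 - ε • (weightedLaplacian B w +
        d • vecMulVec (edgeVec u v) (edgeVec u v))) ^ t *ᵥ x₀)
      atTop (𝓝 fun _ ↦ c) := by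
  have hL := posSemidef_weightedLaplacian B hw
  have hup := posSemidef_two_mul_smul_one_sub_add_smul_vecMulVec_edgeVec
    (posSemidef_two_mul_smul_one_sub (posSemidef_signless_weightedLaplacian hw hB) hΨ) u v d
  obtain ⟨z, hz, hlim⟩ := exists_tendsto_pow_one_sub_smul_mulVec
    (posSemidef_add_smul_vecMulVec_self hL hy hdR.le) hup hε (by linarith) x₀
  obtain ⟨c, rfl⟩ := hker z <| mulVec_eq_zero_of_add_smul_vecMulVec_mulVec_eq_zero
    (isHermitian_iff_isSymm.1 hL.isHermitian) hy hdR.ne' hz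
  exact ⟨c, hlim⟩

/-- **Corollary 2 of the paper.** With step size `0 < ε < 1/Ψ_G`,
a single-edge codeword attack `δ` on `(u,v)` through a concave, differentiable,
`K_uv`-Lipschitz decoding function satisfying
`|δ| < K_uv⁻¹ · min{R_uv(G)⁻¹, ε⁻¹ - Ψ_G}` lets the perturbed discrete-time protocol
`x(t+1) = (I - ε L_Δ) x(t)` reach robust agreement (convergence to a point of
`span{1ₙ}`), independently of the codeword `θ_uv`. -/
theorem sbdc_discrete_time_simplified_robust_agreement
    {n m : ℕ} (hn : 0 < n) (Em : Matrix (Fin n) (Fin m) ℝ) (w : Fin m → ℝ)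
    (hw : ∀ k, 0 < w k)
    (hinc : ∀ k : Fin m, ∃ i j : Fin n, i ≠ j ∧
      ∀ l, Em l k = (if l = i then (1 : ℝ) else 0) - (if l = j then 1 else 0))
    (L : Matrix (Fin n) (Fin n) ℝ)
    (hL : L = Em * Matrix.diagonal w * Em.transpose)
    (hker : ∀ x : Fin n → ℝ, L.mulVec x = 0 ↔ ∃ c : ℝ, x = fun _ => c)
    (u v : Fin n) (huv : u ≠ v)
    (b : Fin n → ℝ)
    (hb : b = fun i => (if i = u then (1 : ℝ) else 0) - (if i = v then 1 else 0))
    -- decoding function of the edge `(u,v)`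
    (p : ℝ → ℝ) (K : ℝ) (hK : 0 < K)
    (hp_diff : Differentiable ℝ p)
    (hp_conc : ConcaveOn ℝ Set.univ p)
    (hp_lip : ∀ η : ℝ, |deriv p η| ≤ K)
    (θ : ℝ)
    (hedge : ∃ k : Fin m, ((∀ l, Em l k = b l) ∨ (∀ l, Em l k = -(b l))) ∧ w k = p θ)
    -- effective resistance between `u` and `v`
    (y : Fin n → ℝ) (hy : L.mulVec y = b)
    (R : ℝ) (hR : R = b ⬝ᵥ y)
    -- maximum weighted degree `Ψ_G`
    (Ψ : ℝ) (hΨ : IsGreatest (Set.range fun i : Fin n => L i i) Ψ)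
    (ε : ℝ) (hε : 0 < ε) (hεΨ : ε < 1 / Ψ)
    (δ : ℝ) (hδ : |δ| < K⁻¹ * min R⁻¹ (ε⁻¹ - Ψ))
    (LΔ : Matrix (Fin n) (Fin n) ℝ)
    (hLΔ : LΔ = L + (p (θ + δ) - p θ) • Matrix.vecMulVec b b) :
    ∀ x0 : Fin n → ℝ, ∃ c : ℝ,
      Tendsto
        (fun t : ℕ => (((1 : Matrix (Fin n) (Fin n) ℝ) - ε • LΔ) ^ t).mulVec x0)
        atTop (nhds fun _ => c) := by
  obtain ⟨hdR, hdΨ⟩ := lt_min_iff.1 (abs_sub_lt_of_abs_deriv_le hp_diff hK hp_lip hδ (θ := θ))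
  obtain rfl : b = edgeVec u v := hb.trans (funext fun l ↦ (edgeVec_apply u v l).symm)
  subst hL hR hLΔ
  exact sbdc_discrete_time_simplified_robust_agreement_general
    (fun k ↦ (hinc k).imp fun i ⟨j, _, hk⟩ ↦
      ⟨j, funext fun l ↦ (hk l).trans (edgeVec_apply i j l).symm⟩)
    (fun k ↦ (hw k).le) (fun x ↦ (hker x).1) hy (fun i ↦ hΨ.2 ⟨i, rfl⟩) hε
    (one_add_mul_pos_of_abs_lt_inv hdR) (mul_add_posPart_lt_one_of_abs_lt hε hdΨ)
end

section
/- Let L ∈ ℝ^{n×n} be symmetric positive semidefinite with kernel exactly span{1ₙ}, and let ε > 0 satisfy ε · λ_max(L) < 2. Then the matrix A = Iₙ − ε L satisfies Aᵗ → (1/n) 1ₙ 1ₙᵀ as t → ∞; consequently, for every x₀ ∈ ℝⁿ, the discrete-time consensus iteration x(t+1) = A x(t) converges to the average consensus point (1ₙᵀ x₀ / n) 1ₙ. -/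
open Matrix BigOperators Filter Topology

/-! On an eigenvector of `L` with eigenvalue `r`, the powers of `1 - ε L` act as those of the scalar
`1 - ε r`. For positive semidefinite `L` with `ε r < 2` this scalar is `1` on the kernel and has
absolute value less than `1` on every other eigenspace, so on an eigenbasis the powers converge to
the orthogonal projection onto the kernel. For the consensus iteration this projection is the
average. -/

theorem tendsto_matrix_of_tendsto_mulVec {R α m n : Type*} [NonAssocSemiring R]
    [TopologicalSpace R] [Fintype n] {l : Filter α} {M : α → Matrix m n R} {N : Matrix m n R}
    (h : ∀ x : n → R, Tendsto (fun t => M t *ᵥ x) l (𝓝 (N *ᵥ x))) : Tendsto M l (𝓝 N) := by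
  classical
  refine tendsto_pi_nhds.2 fun i => tendsto_pi_nhds.2 fun j => ?_
  simpa only [mulVec_single_one, col_apply] using tendsto_pi_nhds.1 (h (Pi.single j 1)) i

section Convergence

variable {R α κ m n : Type*} [CommSemiring R] [TopologicalSpace R] [IsTopologicalSemiring R]
  [Fintype n] {l : Filter α} {M : α → Matrix m n R} {N : Matrix m n R}

theorem tendsto_mulVec_of_mem_span {S : Set (n → R)}
    (hS : ∀ v ∈ S, Tendsto (fun t => M t *ᵥ v) l (𝓝 (N *ᵥ v)))
    {x : n → R} (hx : x ∈ Submodule.span R S) :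
    Tendsto (fun t => M t *ᵥ x) l (𝓝 (N *ᵥ x)) := by
  induction hx using Submodule.span_induction with
  | mem v hv => exact hS v hv
  | zero => simp only [mulVec_zero, tendsto_const_nhds]
  | add v w _ _ hv hw => simpa only [mulVec_add] using hv.add hw
  | smul c v _ hv => simpa only [mulVec_smul] using hv.const_smul c

theorem tendsto_matrix_of_tendsto_mulVec_basis (b : Module.Basis κ R (n → R))
    (h : ∀ k, Tendsto (fun t => M t *ᵥ b k) l (𝓝 (N *ᵥ b k))) : Tendsto M l (𝓝 N) :=
  tendsto_matrix_of_tendsto_mulVec fun x =>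
    tendsto_mulVec_of_mem_span (Set.forall_mem_range.2 h) (b.mem_span x)

end Convergence

theorem pow_mulVec_of_mulVec_eq_smul {R n : Type*} [CommSemiring R] [Fintype n] [DecidableEq n]
    {A : Matrix n n R} {μ : R} {v : n → R} (hv : A *ᵥ v = μ • v) (t : ℕ) :
    (A ^ t) *ᵥ v = μ ^ t • v := by
  induction t with
  | zero => simp only [pow_zero, one_mulVec, one_smul]
  | succ t ih => rw [pow_succ, ← mulVec_mulVec, hv, mulVec_smul, ih, smul_smul, pow_succ']

theorem mul_eq_zero_of_mulVec_eq_self_imp_mulVec_eq_zero {R n : Type*} [Semiring R] [StarRing R]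
    [Fintype n] {L P : Matrix n n R} (hL : L.IsHermitian) (hP : IsStarProjection P)
    (hfix : ∀ x, P *ᵥ x = x → L *ᵥ x = 0) : P * L = 0 := by
  classical
  have hLP : L * P = 0 := ext_of_mulVec_single fun j => by
    rw [← mulVec_mulVec, zero_mulVec]
    exact hfix _ (by rw [mulVec_mulVec, hP.isIdempotentElem.eq])
  have hstar := congrArg star hLP
  rwa [star_mul, hP.isSelfAdjoint.star_eq, hL.isSelfAdjoint.star_eq, star_zero] at hstar

section KernelProjection

open scoped ComplexOrder

variable {𝕜 ι : Type*} [RCLike 𝕜] [Fintype ι] [DecidableEq ι] {L P : Matrix ι ι 𝕜} {ε : ℝ}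

theorem tendsto_one_sub_smul_pow_mulVec (hPL : P * L = 0) (hker : ∀ x, L *ᵥ x = 0 → P *ᵥ x = x)
    {r : ℝ} (hr : r ≠ 0 → |1 - ε * r| < 1) {v : ι → 𝕜} (hv : L *ᵥ v = r • v) :
    Tendsto (fun t : ℕ => ((1 - ε • L) ^ t) *ᵥ v) atTop (𝓝 (P *ᵥ v)) := by
  have hAv : (1 - ε • L) *ᵥ v = ((1 - ε * r : ℝ) : 𝕜) • v := by
    rw [sub_mulVec, one_mulVec, smul_mulVec, hv, smul_smul, RCLike.real_smul_eq_coe_smul (K := 𝕜)]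
    push_cast
    rw [sub_smul, one_smul]
  simp only [pow_mulVec_of_mulVec_eq_smul hAv]
  rcases eq_or_ne r 0 with rfl | hr₀
  · have hPv : P *ᵥ v = v := hker v (by rw [hv, zero_smul])
    simp [hPv]
  · have hPv : P *ᵥ v = 0 := by
      have : r • P *ᵥ v = 0 := by rw [← mulVec_smul, ← hv, mulVec_mulVec, hPL, zero_mulVec]
      exact (smul_eq_zero_iff_right hr₀).1 this
    have hpow : Tendsto (fun t : ℕ => ((1 - ε * r : ℝ) : 𝕜) ^ t) atTop (𝓝 0) :=
      tendsto_pow_atTop_nhds_zero_of_norm_lt_one (by rw [RCLike.norm_ofReal]; exact hr hr₀)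
    simpa only [hPv, zero_smul] using hpow.smul_const v

theorem discrete_consensus_power_tendsto_average_general (hL : L.PosSemidef)
    (hP : IsStarProjection P) (hker : ∀ x, L *ᵥ x = 0 ↔ P *ᵥ x = x)
    (hε : 0 < ε) (hspec : ∀ r ∈ spectrum ℝ L, ε * r < 2) :
    Tendsto (fun t : ℕ => (1 - ε • L) ^ t) atTop (𝓝 P) ∧
      ∀ x₀ : ι → 𝕜, Tendsto (fun t : ℕ => ((1 - ε • L) ^ t) *ᵥ x₀) atTop (𝓝 (P *ᵥ x₀)) := by
  have hH := hL.isHermitian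
  have hPL : P * L = 0 :=
    mul_eq_zero_of_mulVec_eq_self_imp_mulVec_eq_zero hH hP fun x => (hker x).2
  have hpow : Tendsto (fun t : ℕ => (1 - ε • L) ^ t) atTop (𝓝 P) := by
    refine tendsto_matrix_of_tendsto_mulVec_basis
      (hH.eigenvectorBasis.toBasis.map (WithLp.linearEquiv 2 𝕜 (ι → 𝕜))) fun j => ?_
    have hr : hH.eigenvalues j ≠ 0 → |1 - ε * hH.eigenvalues j| < 1 := fun hne => by
      have hpos := mul_pos hε ((hL.eigenvalues_nonneg j).lt_of_ne' hne)
      have hlt := hspec _ (hH.eigenvalues_mem_spectrum_real j)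
      exact abs_lt.2 ⟨by linarith, by linarith⟩
    simpa using tendsto_one_sub_smul_pow_mulVec hPL (fun x => (hker x).1) hr
      (hH.mulVec_eigenvectorBasis j)
  exact ⟨hpow, fun x₀ =>
    ((continuous_id.matrix_mulVec continuous_const).tendsto P).comp hpow⟩

end KernelProjection

section Averaging

variable {K ι : Type*} [Field K] [Fintype ι]

variable (K ι) in
/-- The matrix `(1/n) 1ₙ 1ₙᵀ`, with `n` the cardinality of `ι`: it replaces every coordinate of a
vector by the average of the coordinates. -/
def averagingMatrix : Matrix ι ι K :=
  of fun _ _ => (Fintype.card ι : K)⁻¹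

theorem averagingMatrix_mulVec (x : ι → K) :
    averagingMatrix K ι *ᵥ x = fun _ => (∑ i, x i) / Fintype.card ι := by
  ext i
  simp only [averagingMatrix, mulVec, dotProduct, of_apply, ← Finset.mul_sum, div_eq_inv_mul]

variable [CharZero K]

theorem averagingMatrix_mulVec_const (c : K) :
    averagingMatrix K ι *ᵥ (fun _ => c) = fun _ => c := by
  ext i
  have : Nonempty ι := ⟨i⟩
  simp [averagingMatrix_mulVec]

theorem averagingMatrix_mulVec_eq_self_iff {x : ι → K} :
    averagingMatrix K ι *ᵥ x = x ↔ ∃ c : K, x = fun _ => c := by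
  constructor
  · intro hx
    exact ⟨_, hx.symm.trans (averagingMatrix_mulVec x)⟩
  · rintro ⟨c, rfl⟩
    exact averagingMatrix_mulVec_const c

theorem isStarProjection_averagingMatrix [StarRing K] :
    IsStarProjection (averagingMatrix K ι) where
  isIdempotentElem := by
    ext i _
    exact congrFun (averagingMatrix_mulVec_const (Fintype.card ι : K)⁻¹) i
  isSelfAdjoint := by
    ext i j
    simp [averagingMatrix, star_apply]

end Averaging

/-- If `L` is symmetric PSD with kernel exactly `span{1ₙ}` and
`ε λ_max(L) < 2`, then `A = I - ε L` satisfies `Aᵗ → (1/n) 1ₙ 1ₙᵀ`, so the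
discrete-time consensus iteration `x(t+1) = A x(t)` converges to the average
consensus point `(1ₙᵀ x₀ / n) 1ₙ` for every initial state `x₀`. -/
theorem discrete_consensus_power_tendsto_average
    {n : ℕ} (hn : 0 < n) (L : Matrix (Fin n) (Fin n) ℝ)
    (hPSD : L.PosSemidef)
    (hker : ∀ x : Fin n → ℝ, L.mulVec x = 0 ↔ ∃ c : ℝ, x = fun _ => c)
    (lmax : ℝ)
    (hlmax : IsGreatest {lam : ℝ | Module.End.HasEigenvalue (Matrix.toLin' L) lam} lmax)
    (ε : ℝ) (hε : 0 < ε) (hεl : ε * lmax < 2) :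
    Tendsto (fun t : ℕ => ((1 : Matrix (Fin n) (Fin n) ℝ) - ε • L) ^ t) atTop
        (nhds (Matrix.of fun _ _ => (n : ℝ)⁻¹)) ∧
      ∀ x₀ : Fin n → ℝ,
        Tendsto
          (fun t : ℕ => (((1 : Matrix (Fin n) (Fin n) ℝ) - ε • L) ^ t).mulVec x₀)
          atTop (nhds fun _ => (∑ i, x₀ i) / n) := by
  have hspec : ∀ r ∈ spectrum ℝ L, ε * r < 2 := fun r hr => by
    rw [← spectrum_toLin', ← Module.End.hasEigenvalue_iff_mem_spectrum] at hr
    exact (mul_le_mul_of_nonneg_left (hlmax.2 hr) hε.le).trans_lt hεl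
  obtain ⟨hpow, hvec⟩ :=
    discrete_consensus_power_tendsto_average_general hPSD isStarProjection_averagingMatrix
      (fun x => (hker x).trans averagingMatrix_mulVec_eq_self_iff.symm) hε hspec
  exact ⟨by simpa only [averagingMatrix, Fintype.card_fin] using hpow,
    fun x₀ => by simpa only [averagingMatrix_mulVec, Fintype.card_fin] using hvec x₀⟩
end
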